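/- arXiv:2405.00778 — 3 statements merged into one kernel-verified Lean document; each statement's English description precedes it below -/
import Mathlib

section
/- Let 0 ≤ a ≤ m and 0 ≤ b ≤ n. Every circuit of the bipartite rigidity matroid B_{m,n}(a,b) violates the (a,b)-Laman condition if and only if at least one of the following holds: (1) a ≤ 1, (2) b ≤ 1, (3) m − a ≤ 2, or (4) n − b ≤ 2. -/
open scoped Classical

noncomputable section

/-- The rational function field `ℚ(x_{pj}, y_{qℓ})` with `(p,j) ∈ [m]×[a]`,
`(q,ℓ) ∈ [n]×[b]`. -/
abbrev RField (m n a b : ℕ) :=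
  FractionRing (MvPolynomial ((Fin m × Fin a) ⊕ (Fin n × Fin b)) ℚ)

/-- The column of the bipartite rigidity matrix `R_{m,n}(a,b)` labeled by
`e ∈ [m]×[n]`: the row labeled `(j,k) ∈ [a]×[n]` has entry `x_{e.1, j}` if `e.2 = k`
and `0` otherwise, and the row labeled `(ℓ,i) ∈ [b]×[m]` has entry `y_{e.2, ℓ}` if
`e.1 = i` and `0` otherwise. -/
noncomputable def rigCol (m n a b : ℕ) (e : Fin m × Fin n) :
    (Fin a × Fin n) ⊕ (Fin b × Fin m) → RField m n a b := fun row =>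
  match row with
  | Sum.inl (j, k) =>
      if e.2 = k then
        algebraMap (MvPolynomial ((Fin m × Fin a) ⊕ (Fin n × Fin b)) ℚ) (RField m n a b)
          (MvPolynomial.X (Sum.inl (e.1, j)))
      else 0
  | Sum.inr (l, i) =>
      if e.1 = i then
        algebraMap (MvPolynomial ((Fin m × Fin a) ⊕ (Fin n × Fin b)) ℚ) (RField m n a b)
          (MvPolynomial.X (Sum.inr (e.2, l)))
      else 0

/-- `G` is independent in the bipartite rigidity matroid `B_{m,n}(a,b)`: the columns of
`R_{m,n}(a,b)` indexed by `G` are linearly independent. -/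
def RigIndep (m n a b : ℕ) (G : Set (Fin m × Fin n)) : Prop :=
  LinearIndependent (RField m n a b) (fun e : G => rigCol m n a b e)

/-- `U` violates the `(a,b)`-Laman condition: there are `S ⊆ [m]`, `T ⊆ [n]` with
`|S| ≥ a`, `|T| ≥ b` and `|U ∩ (S×T)| > |S|·b + |T|·a − a·b` (stated additively to
avoid truncated subtraction). -/
def ViolatesLaman (m n a b : ℕ) (U : Finset (Fin m × Fin n)) : Prop :=
  ∃ S : Finset (Fin m), ∃ T : Finset (Fin n), a ≤ S.card ∧ b ≤ T.card ∧
    S.card * b + T.card * a < (U ∩ S ×ˢ T).card + a * b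

/-- `U` is a minimal set violating the `(a,b)`-Laman condition. -/
def MinimalLamanViolator (m n a b : ℕ) (U : Finset (Fin m × Fin n)) : Prop :=
  ViolatesLaman m n a b U ∧ ∀ V : Finset (Fin m × Fin n), V ⊂ U → ¬ ViolatesLaman m n a b V

/-- `C` is a circuit of the bipartite rigidity matroid `B_{m,n}(a,b)`: a minimal set
indexing linearly dependent columns of `R_{m,n}(a,b)`. -/
def RigCircuit (m n a b : ℕ) (C : Finset (Fin m × Fin n)) : Prop :=
  ¬ RigIndep m n a b (↑C : Set (Fin m × Fin n)) ∧
    ∀ D : Finset (Fin m × Fin n), D ⊂ C → RigIndep m n a b (↑D : Set (Fin m × Fin n))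

/-- Stress-freeness of `U` at the realization `x, y`. -/
def SF {m n a b : ℕ} {K : Type} [Field K] (x : Fin m → Fin a → K) (y : Fin n → Fin b → K)
    (U : Finset (Fin m × Fin n)) : Prop :=
  ∀ W : Fin m → Fin n → K, (∀ p q, (p, q) ∉ U → W p q = 0) →
    (∀ j q, ∑ p, x p j * W p q = 0) → (∀ l p, ∑ q, y q l * W p q = 0) → ∀ p q, W p q = 0

/-- The matrix of columns over a general commutative ring. -/
def genCol {m n a b : ℕ} {K : Type} [CommRing K] (x : Fin m → Fin a → K) (y : Fin n → Fin b → K)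
    (r : (Fin a × Fin n) ⊕ (Fin b × Fin m)) (e : Fin m × Fin n) : K :=
  match r with
  | Sum.inl (j, k) => if e.2 = k then x e.1 j else 0
  | Sum.inr (l, i) => if e.1 = i then y e.2 l else 0

def xg (m n a b : ℕ) (p : Fin m) (j : Fin a) : RField m n a b :=
  algebraMap (MvPolynomial ((Fin m × Fin a) ⊕ (Fin n × Fin b)) ℚ) (RField m n a b)
          (MvPolynomial.X (Sum.inl (p, j)))

def yg (m n a b : ℕ) (q : Fin n) (l : Fin b) : RField m n a b :=
  algebraMap (MvPolynomial ((Fin m × Fin a) ⊕ (Fin n × Fin b)) ℚ) (RField m n a b)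
          (MvPolynomial.X (Sum.inr (q, l)))

lemma rigCol_eq (m n a b : ℕ) (e : Fin m × Fin n) (r) :
    rigCol m n a b e r = genCol (xg m n a b) (yg m n a b) r e := by
  rcases r with ⟨j, k⟩ | ⟨l, i⟩ <;> rfl

/-- extension by zero -/
def ext0 {m n : ℕ} {K : Type} [Field K] (U : Finset (Fin m × Fin n)) (w : U → K)
    (p : Fin m) (q : Fin n) : K := if h : (p, q) ∈ U then w ⟨(p, q), h⟩ else 0

lemma sum_ext0 {m n : ℕ} {K : Type} [Field K] (U : Finset (Fin m × Fin n)) (w : U → K)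
    (F : Fin m × Fin n → K) :
    ∑ e : U, F e * w e = ∑ p, ∑ q, F (p, q) * ext0 U w p q := by
  rw [← Fintype.sum_prod_type' (f := fun p q => F (p, q) * ext0 U w p q)]
  rw [← Finset.sum_subset (Finset.subset_univ U)]
  · rw [← Finset.sum_coe_sort U]
    apply Finset.sum_congr rfl
    rintro ⟨⟨p, q⟩, h⟩ _
    simp [ext0, h]
  · rintro ⟨p, q⟩ _ h
    simp [ext0, h]

lemma genCol_sum_inl {m n a b : ℕ} {K : Type} [Field K] (x : Fin m → Fin a → K)
    (y : Fin n → Fin b → K) (W : Fin m → Fin n → K) (j k) :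
    ∑ p, ∑ q, genCol x y (Sum.inl (j, k)) (p, q) * W p q = ∑ p, x p j * W p k := by
  simp [genCol]

lemma genCol_sum_inr {m n a b : ℕ} {K : Type} [Field K] (x : Fin m → Fin a → K)
    (y : Fin n → Fin b → K) (W : Fin m → Fin n → K) (l i) :
    ∑ p, ∑ q, genCol x y (Sum.inr (l, i)) (p, q) * W p q = ∑ q, y q l * W i q := by
  simp [genCol, ite_mul]

lemma sf_iff {m n a b : ℕ} {K : Type} [Field K] (x : Fin m → Fin a → K)
    (y : Fin n → Fin b → K) (U : Finset (Fin m × Fin n)) :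
    SF x y U ↔ ∀ w : U → K, (∀ r, ∑ e : U, genCol x y r e * w e = 0) → w = 0 := by
  constructor
  · intro h w hw
    have := h (ext0 U w) (by intro p q hpq; simp [ext0, hpq])
      (by intro j q
          rw [← genCol_sum_inl x y, ← sum_ext0]; exact hw _)
      (by intro l p
          rw [← genCol_sum_inr x y, ← sum_ext0]; exact hw _)
    funext ⟨⟨p, q⟩, hpq⟩
    have h2 := this p q
    simpa [ext0, hpq] using h2
  · intro h W hU hx hy p q
    by_cases hpq : (p, q) ∈ U
    · have hW : ext0 U (fun e => W e.1.1 e.1.2) = W := by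
        funext p q
        by_cases hpq : (p, q) ∈ U
        · simp [ext0, hpq]
        · simp [ext0, hpq, hU p q hpq]
      have := h (fun e => W e.1.1 e.1.2) (by
        intro r
        rw [sum_ext0, hW]
        rcases r with ⟨j, k⟩ | ⟨l, i⟩
        · rw [genCol_sum_inl]; exact hx _ _
        · rw [genCol_sum_inr]; exact hy _ _)
      exact congrFun this ⟨(p, q), hpq⟩
    · exact hU p q hpq

lemma rigIndep_iff (m n a b : ℕ) (U : Finset (Fin m × Fin n)) :
    RigIndep m n a b (↑U : Set (Fin m × Fin n)) ↔ SF (xg m n a b) (yg m n a b) U := by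
  rw [sf_iff]
  unfold RigIndep
  rw [Fintype.linearIndependent_iff]
  constructor
  · intro h w hw
    funext e
    refine h w ?_ e
    funext r
    rw [Finset.sum_apply]
    simp only [Pi.smul_apply, smul_eq_mul, Pi.zero_apply]
    rw [← hw r]
    apply Finset.sum_congr rfl
    intro e _
    rw [rigCol_eq, mul_comm]
  · intro h w hw e
    refine congrFun (h w ?_) e
    intro r
    have := congrFun hw r
    rw [Finset.sum_apply] at this
    simp only [Pi.smul_apply, smul_eq_mul, Pi.zero_apply] at this
    rw [← this]
    apply Finset.sum_congr rfl
    intro e _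
    rw [rigCol_eq, mul_comm]

lemma det_transfer {A F α β : Type} [CommRing A] [Field F] [Fintype α] [Fintype β]
    [DecidableEq α] [DecidableEq β]
    (φ : A →+* ℚ) (ι : ℚ →+* A) (hφι : ∀ c, φ (ι c) = c) (ψ : A →+* F)
    (hψ : Function.Injective ψ) (R : Matrix α β A)
    (hN : ∀ w : β → ℚ, (R.map φ).mulVec w = 0 → w = 0) (w : β → F)
    (hw : (R.map ψ).mulVec w = 0) : w = 0 := by
  have hN' : LinearMap.ker (Matrix.toLin' (R.map φ)) = ⊥ := by
    rw [LinearMap.ker_eq_bot']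
    intro w hw
    exact hN w hw
  obtain ⟨g, hg⟩ := LinearMap.exists_leftInverse_of_injective _ hN'
  obtain ⟨B, hB⟩ : ∃ B : Matrix β α ℚ, B * R.map φ = 1 := by
    refine ⟨LinearMap.toMatrix' g, ?_⟩
    have := congrArg LinearMap.toMatrix' hg
    rw [LinearMap.toMatrix'_comp] at this
    simpa using this
  have hD : ((B.map ι) * R).det ≠ 0 := by
    intro h0
    have h1 : φ ((B.map ι) * R).det = 0 := by rw [h0, map_zero]
    rw [RingHom.map_det] at h1
    have h2 : φ.mapMatrix ((B.map ι) * R) = 1 := by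
      rw [RingHom.mapMatrix_apply, Matrix.map_mul, ← hB]
      congr 1
      ext i j
      simp [hφι]
    rw [h2] at h1
    simp at h1
  have hD' : (((B.map ι) * R).map ψ).det ≠ 0 := by
    have : (((B.map ι) * R).map ψ).det = ψ ((B.map ι) * R).det := by rw [RingHom.map_det]; rfl
    rw [this]
    intro h0
    exact hD (hψ (by rw [h0, map_zero]))
  apply Matrix.eq_zero_of_mulVec_eq_zero hD'
  rw [Matrix.map_mul, ← Matrix.mulVec_mulVec, hw, Matrix.mulVec_zero]

lemma sf_generic {m n a b : ℕ} (x : Fin m → Fin a → ℚ)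
    (y : Fin n → Fin b → ℚ) (U : Finset (Fin m × Fin n)) (h : SF x y U) :
    SF (xg m n a b) (yg m n a b) U := by
  rw [sf_iff] at h ⊢
  intro w hw
  refine det_transfer (A := MvPolynomial ((Fin m × Fin a) ⊕ (Fin n × Fin b)) ℚ)
    (α := (Fin a × Fin n) ⊕ (Fin b × Fin m))
    (MvPolynomial.eval (Sum.elim (fun z => x z.1 z.2) (fun z => y z.1 z.2)))
    MvPolynomial.C (fun c => by simp)
    (algebraMap (MvPolynomial ((Fin m × Fin a) ⊕ (Fin n × Fin b)) ℚ) (RField m n a b))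
    (IsFractionRing.injective _ _)
    (Matrix.of fun r (e : U) => genCol
      (fun p j => (MvPolynomial.X (Sum.inl (p, j))))
      (fun q l => (MvPolynomial.X (Sum.inr (q, l)))) r e) ?_ w ?_
  · intro w hw
    apply h
    intro r
    rw [← Pi.zero_apply (M := fun _ => ℚ) r, ← hw]
    simp only [Matrix.mulVec, dotProduct, Matrix.map_apply]
    apply Finset.sum_congr rfl
    intro e _
    congr 1
    rcases r with ⟨j, k⟩ | ⟨l, i⟩
    · simp only [genCol, Matrix.of_apply]
      split_ifs <;> simp
    · simp only [genCol, Matrix.of_apply]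
      split_ifs <;> simp
  · funext r
    rw [Pi.zero_apply, ← hw r]
    simp only [Matrix.mulVec, dotProduct, Matrix.map_apply]
    apply Finset.sum_congr rfl
    intro e _
    congr 1
    rcases r with ⟨j, k⟩ | ⟨l, i⟩
    · simp only [genCol, Matrix.of_apply]
      split_ifs <;> simp [xg]
    · simp only [genCol, Matrix.of_apply]
      split_ifs <;> simp [yg]

lemma sf_swap {m n a b : ℕ} {K : Type} [Field K] (x : Fin m → Fin a → K)
    (y : Fin n → Fin b → K) (U : Finset (Fin m × Fin n))
    (h : SF y x (U.map (Equiv.prodComm _ _).toEmbedding)) : SF x y U := by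
  intro W hU hx hy p q
  refine h (fun q p => W p q) ?_ hy hx q p
  intro q p hqp
  apply hU
  intro h'
  apply hqp
  simpa using h'

lemma viol_swap {m n a b : ℕ} (U : Finset (Fin m × Fin n))
    (h : ViolatesLaman n m b a (U.map (Equiv.prodComm _ _).toEmbedding)) :
    ViolatesLaman m n a b U := by
  obtain ⟨S, T, hS, hT, hc⟩ := h
  refine ⟨T, S, hT, hS, ?_⟩
  have : (U.map (Equiv.prodComm _ _).toEmbedding ∩ S ×ˢ T) =
      (U ∩ T ×ˢ S).map (Equiv.prodComm _ _).toEmbedding := by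
    ext ⟨q, p⟩
    simp [and_comm]
  rw [this, Finset.card_map] at hc
  nlinarith

lemma viol_mono {m n a b : ℕ} {U V : Finset (Fin m × Fin n)} (hUV : U ⊆ V)
    (h : ViolatesLaman m n a b U) : ViolatesLaman m n a b V := by
  obtain ⟨S, T, hS, hT, hc⟩ := h
  refine ⟨S, T, hS, hT, hc.trans_le ?_⟩
  gcongr

/-- Vandermonde realization. -/
def vd (m a : ℕ) (p : Fin m) (j : Fin a) : ℚ := (p.val : ℚ) ^ j.val

lemma vander {m a : ℕ} (s : Finset (Fin m)) (hs : s.card ≤ a) (f : Fin m → ℚ)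
    (hf : ∀ p, p ∉ s → f p = 0) (h : ∀ j, ∑ p, vd m a p j * f p = 0) : ∀ p, f p = 0 := by
  intro p0
  by_contra hne
  have hp0 : p0 ∈ s := by by_contra h'; exact hne (hf _ h')
  let P : Polynomial ℚ := ∏ p ∈ s.erase p0, (Polynomial.X - Polynomial.C (p.val : ℚ))
  have hdeg : P.natDegree < a := by
    have : P.natDegree = (s.erase p0).card := by
      simp only [P]
      rw [Polynomial.natDegree_prod_of_monic]
      · simp only [Polynomial.natDegree_X_sub_C, Finset.sum_const, smul_eq_mul, mul_one]
      · intro i _; exact Polynomial.monic_X_sub_C _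
    rw [this]
    have := Finset.card_erase_lt_of_mem hp0
    omega
  have h1 : ∑ p, P.eval (p.val : ℚ) * f p = 0 := by
    simp_rw [Polynomial.eval_eq_sum_range' hdeg, Finset.sum_mul]
    rw [Finset.sum_comm]
    apply Finset.sum_eq_zero
    intro i hi
    have := h ⟨i, Finset.mem_range.1 hi⟩
    simp only [vd] at this
    simp_rw [mul_assoc]
    rw [← Finset.mul_sum, this, mul_zero]
  rw [Finset.sum_eq_single p0] at h1
  · rcases mul_eq_zero.1 h1 with h2 | h2
    · simp only [P, Polynomial.eval_prod, Finset.prod_eq_zero_iff] at h2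
      obtain ⟨p, hp, h3⟩ := h2
      simp only [Polynomial.eval_sub, Polynomial.eval_X, Polynomial.eval_C, sub_eq_zero] at h3
      have h4 : p0.val = p.val := by exact_mod_cast h3
      exact (Finset.mem_erase.1 hp).1 (Fin.ext h4).symm
    · exact hne h2
  · intro p _ hp
    by_cases hps : p ∈ s
    · have : P.eval (p.val : ℚ) = 0 := by
        simp only [P, Polynomial.eval_prod]
        apply Finset.prod_eq_zero (Finset.mem_erase.2 ⟨hp, hps⟩)
        simp
      rw [this, zero_mul]
    · rw [hf p hps, mul_zero]
  · simp

lemma exists_ker {m a : ℕ} {K : Type} [Field K] (x : Fin m → Fin a → K) (s : Finset (Fin m))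
    (hs : a < s.card) : ∃ f : Fin m → K, (∃ p, f p ≠ 0) ∧ (∀ p, p ∉ s → f p = 0) ∧
      ∀ j, ∑ p, x p j * f p = 0 := by
  let L : (s → K) →ₗ[K] (Fin a → K) := Matrix.toLin' (Matrix.of fun j (p : s) => x p j)
  have hL : LinearMap.ker L ≠ ⊥ := by
    apply LinearMap.ker_ne_bot_of_finrank_lt
    simpa using hs
  obtain ⟨f, hf, hne⟩ := (Submodule.ne_bot_iff _).1 hL
  refine ⟨fun p => if h : p ∈ s then f ⟨p, h⟩ else 0, ?_, ?_, ?_⟩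
  · by_contra hc
    push Not at hc
    apply hne
    funext ⟨p, hp⟩
    simpa [hp] using hc p
  · intro p hp; simp [hp]
  · intro j
    have h1 := congrFun (LinearMap.mem_ker.1 hf) j
    simp only [L, Matrix.toLin'_apply, Matrix.mulVec, dotProduct, Matrix.of_apply,
      Pi.zero_apply] at h1
    refine Eq.trans ?_ h1
    rw [← Finset.sum_subset (Finset.subset_univ s)]
    · rw [← Finset.sum_coe_sort s]
      apply Finset.sum_congr rfl
      rintro ⟨p, hp⟩ _
      simp [hp]
    · intro p _ hp
      simp [hp]

/-- rank-one stress with small row support vanishes at the generic point -/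
lemma rank_one_vanish {m n a b : ℕ} (s : Finset (Fin m)) (hs : s.card ≤ a)
    (f : Fin m → RField m n a b) (g : Fin n → RField m n a b)
    (hf : ∀ p, p ∉ s → f p = 0) (hx : ∀ j, ∑ p, xg m n a b p j * f p = 0)
    (hy : ∀ l, ∑ q, yg m n a b q l * g q = 0) : ∀ p q, f p * g q = 0 := by
  have h1 : SF (vd m a) (vd n b) (s ×ˢ (Finset.univ : Finset (Fin n))) := by
    intro W hU hx hy p q
    refine vander s hs (fun p => W p q) ?_ (fun j => hx j q) p
    intro p hp
    apply hU
    simp [hp]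
  refine sf_generic _ _ _ h1 (fun p q => f p * g q) ?_ ?_ ?_
  · intro p q hpq
    have : p ∉ s := by simpa using hpq
    simp [hf p this]
  · intro j q
    simp_rw [← mul_assoc]
    rw [← Finset.sum_mul, hx, zero_mul]
  · intro l p
    simp_rw [mul_left_comm _ (f p)]
    rw [← Finset.mul_sum, hy, mul_zero]

lemma no_comb {m n a b : ℕ} (s : Finset (Fin m)) (hs : s.card ≤ a)
    (f f' : Fin m → RField m n a b) (g g' : Fin n → RField m n a b) (c d : RField m n a b)
    (hc : c ≠ 0)
    (hf : ∀ p, p ∉ s → f p = 0 ∨ f' p = 0) (hx : ∀ j, ∑ p, xg m n a b p j * f p = 0)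
    (hy : ∀ l, ∑ q, yg m n a b q l * g q = 0) (hf0 : ∃ p, f p ≠ 0) (hg0 : ∃ q, g q ≠ 0)
    (h : ∀ p q, c * (f p * g q) + d * (f' p * g' q) = 0) : False := by
  obtain ⟨p0, hp0⟩ := hf0
  obtain ⟨q0, hq0⟩ := hg0
  have := rank_one_vanish s hs f g ?_ hx hy p0 q0
  · exact (mul_ne_zero hp0 hq0) this
  · intro p hp
    rcases hf p hp with h1 | h1
    · exact h1
    · have h2 := h p q0
      rw [h1, zero_mul, mul_zero, add_zero] at h2
      rcases mul_eq_zero.1 h2 with h3 | h3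
      · exact absurd h3 hc
      · exact (mul_eq_zero.1 h3).resolve_right hq0

/-- The non-Laman dependent set. -/
def badU (m n a b : ℕ) : Finset (Fin m × Fin n) :=
  Finset.univ.filter fun e => e.1.val < a + 3 ∧ e.2.val < b + 3 ∧
    ¬ (e.1.val < 5 ∧ e.2.val < 5 ∧ e.1.val / 2 = e.2.val / 2)

lemma card_lt {m k : ℕ} (hk : k ≤ m) :
    (Finset.univ.filter fun p : Fin m => p.val < k).card = k := by
  rw [Fin.card_filter_val_lt]; omega

lemma card_sub2 {m a u v : ℕ} (hm : a + 3 ≤ m) (hv : v < a + 3) (huv : u < v) :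
    a < (Finset.univ.filter fun p : Fin m => p.val < a + 3 ∧ p.val ≠ u ∧ p.val ≠ v).card := by
  have h := card_lt hm
  have h2 : (Finset.univ.filter fun p : Fin m => p.val < a + 3) ⊆
     insert (⟨u, by omega⟩ : Fin m) (insert (⟨v, by omega⟩ : Fin m) (Finset.univ.filter
       fun p : Fin m => p.val < a + 3 ∧ p.val ≠ u ∧ p.val ≠ v)) := by
    intro p hp
    simp only [Finset.mem_insert, Finset.mem_filter, Finset.mem_univ, true_and, Fin.ext_iff]
      at hp ⊢
    tauto
  have h3 := Finset.card_le_card h2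
  have h4 := Finset.card_insert_le (⟨u, by omega⟩ : Fin m) (insert (⟨v, by omega⟩ : Fin m)
    (Finset.univ.filter fun p : Fin m => p.val < a + 3 ∧ p.val ≠ u ∧ p.val ≠ v))
  have h5 := Finset.card_insert_le (⟨v, by omega⟩ : Fin m)
    (Finset.univ.filter fun p : Fin m => p.val < a + 3 ∧ p.val ≠ u ∧ p.val ≠ v)
  omega

lemma card_int {m a : ℕ} (hm : a + 3 ≤ m) (ha : 2 ≤ a) :
    (Finset.univ.filter fun p : Fin m => p.val < a + 3 ∧ 4 ≤ p.val).card ≤ a := by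
  have h := card_lt hm
  have h' := card_lt (show 4 ≤ m by omega)
  have h2 : (Finset.univ.filter fun p : Fin m => p.val < a + 3 ∧ 4 ≤ p.val) ⊆
     (Finset.univ.filter fun p : Fin m => p.val < a + 3) \
      (Finset.univ.filter fun p : Fin m => p.val < 4) := by
    intro p hp
    simp only [Finset.mem_sdiff, Finset.mem_filter, Finset.mem_univ, true_and] at hp ⊢
    omega
  have h3 := Finset.card_le_card h2
  rw [Finset.card_sdiff_of_subset] at h3
  · omega
  · intro p hp
    simp only [Finset.mem_filter, Finset.mem_univ, true_and] at hp ⊢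
    omega

lemma badU_dep (m n a b : ℕ) (ha : 2 ≤ a) (hb : 2 ≤ b) (hm : a + 3 ≤ m) (hn : b + 3 ≤ n) :
    ¬ SF (xg m n a b) (yg m n a b) (badU m n a b) := by
  intro hSF
  obtain ⟨f1, f1n, f1s, f1x⟩ := exists_ker (xg m n a b) _
    (card_sub2 hm (show 1 < a + 3 by omega) zero_lt_one)
  obtain ⟨f2, f2n, f2s, f2x⟩ := exists_ker (xg m n a b) _
    (card_sub2 hm (show 3 < a + 3 by omega) (show 2 < 3 by omega))
  obtain ⟨g1, g1n, g1s, g1x⟩ := exists_ker (yg m n a b) _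
    (card_sub2 hn (show 1 < b + 3 by omega) zero_lt_one)
  obtain ⟨g2, g2n, g2s, g2x⟩ := exists_ker (yg m n a b) _
    (card_sub2 hn (show 3 < b + 3 by omega) (show 2 < 3 by omega))
  simp only [Finset.mem_filter, Finset.mem_univ, true_and] at f1s f2s g1s g2s
  let p4 : Fin m := ⟨4, by omega⟩
  let q4 : Fin n := ⟨4, by omega⟩
  obtain ⟨c, d, hcd, hsum⟩ : ∃ c d : RField m n a b, (c ≠ 0 ∨ d ≠ 0) ∧
      c * (f1 p4 * g2 q4) + d * (f2 p4 * g1 q4) = 0 := by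
    by_cases h : f1 p4 * g2 q4 = 0
    · exact ⟨1, 0, Or.inl one_ne_zero, by rw [h]; ring⟩
    · exact ⟨- (f2 p4 * g1 q4), f1 p4 * g2 q4, Or.inr h, by ring⟩
  have hW := hSF (fun p q => c * (f1 p * g2 q) + d * (f2 p * g1 q)) ?_ ?_ ?_
  · have hcap : ∀ p : Fin m, p ∉ (Finset.univ.filter fun p : Fin m => p.val < a + 3 ∧ 4 ≤ p.val) →
        f1 p = 0 ∨ f2 p = 0 := by
      intro p hp
      simp only [Finset.mem_filter, Finset.mem_univ, true_and] at hp
      by_cases h : p.val < a + 3 ∧ p.val ≠ 0 ∧ p.val ≠ 1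
      · right; apply f2s; omega
      · left; exact f1s p h
    rcases hcd with h | h
    · exact no_comb _ (card_int hm ha) f1 f2 g2 g1 c d h hcap f1x g2x f1n g2n hW
    · exact no_comb _ (card_int hm ha) f2 f1 g1 g2 d c h (fun p hp => (hcap p hp).symm) f2x g1x
        f2n g1n (fun p q => by rw [← hW p q]; ring)
  · intro p q hpq
    simp only [badU, Finset.mem_filter, Finset.mem_univ, true_and] at hpq
    by_cases h1 : p.val < a + 3
    swap
    · simp [f1s p (by omega), f2s p (by omega)]
    by_cases h2 : q.val < b + 3
    swap
    · simp [g1s q (by omega), g2s q (by omega)]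
    have h3 : p.val < 5 ∧ q.val < 5 ∧ p.val / 2 = q.val / 2 := by
      by_contra h; exact hpq ⟨h1, h2, h⟩
    obtain ⟨h3, h4, h5⟩ := h3
    have : (p.val < 2 ∧ q.val < 2) ∨ ((p.val = 2 ∨ p.val = 3) ∧ (q.val = 2 ∨ q.val = 3)) ∨
      (p.val = 4 ∧ q.val = 4) := by omega
    rcases this with h | h | h
    · simp [f1s p (by omega), g1s q (by omega)]
    · simp [f2s p (by omega), g2s q (by omega)]
    · have e1 : p = p4 := Fin.ext h.1
      have e2 : q = q4 := Fin.ext h.2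
      rw [e1, e2]; exact hsum
  · intro j q
    have : ∀ p, xg m n a b p j * (c * (f1 p * g2 q) + d * (f2 p * g1 q)) =
      (c * g2 q) * (xg m n a b p j * f1 p) + (d * g1 q) * (xg m n a b p j * f2 p) := by
      intro p; ring
    simp_rw [this]
    rw [Finset.sum_add_distrib, ← Finset.mul_sum, ← Finset.mul_sum, f1x, f2x]
    ring
  · intro l p
    have : ∀ q, yg m n a b q l * (c * (f1 p * g2 q) + d * (f2 p * g1 q)) =
      (c * f1 p) * (yg m n a b q l * g2 q) + (d * f2 p) * (yg m n a b q l * g1 q) := by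
      intro q; ring
    simp_rw [this]
    rw [Finset.sum_add_distrib, ← Finset.mul_sum, ← Finset.mul_sum, g1x, g2x]
    ring

/-- restrict a subset of `Fin m` to `Fin 5` -/
def low {m : ℕ} (hm : 5 ≤ m) (S : Finset (Fin m)) : Finset (Fin 5) :=
  Finset.univ.filter fun i => Fin.castLE hm i ∈ S

lemma low_card {m a : ℕ} (ha : 2 ≤ a) (hm : a + 3 ≤ m) (S : Finset (Fin m))
    (hS : ∀ p ∈ S, p.val < a + 3) : S.card ≤ (low (show 5 ≤ m by omega) S).card + (a - 2) := by
  have h1 : S ⊆ (low (show 5 ≤ m by omega) S).map (Fin.castLEEmb (show 5 ≤ m by omega)) ∪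
      ((Finset.univ.filter fun p : Fin m => p.val < a + 3) \
      (Finset.univ.filter fun p : Fin m => p.val < 5)) := by
    intro p hp
    by_cases h5 : p.val < 5
    · apply Finset.mem_union_left
      simp only [Finset.mem_map, low, Finset.mem_filter, Finset.mem_univ, true_and]
      exact ⟨⟨p.val, h5⟩, hp, rfl⟩
    · apply Finset.mem_union_right
      simp [hS p hp, h5]
  have h2 := Finset.card_le_card h1
  have h3 := Finset.card_union_le ((low (show 5 ≤ m by omega) S).map
      (Fin.castLEEmb (show 5 ≤ m by omega)))
      ((Finset.univ.filter fun p : Fin m => p.val < a + 3) \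
      (Finset.univ.filter fun p : Fin m => p.val < 5))
  rw [Finset.card_map, Finset.card_sdiff_of_subset, card_lt hm,
    card_lt (show 5 ≤ m by omega)] at h3
  · omega
  · intro p hp
    simp only [Finset.mem_filter, Finset.mem_univ, true_and] at hp ⊢
    omega

lemma five_check (A B : Finset (Fin 5)) (hA : 3 ≤ A.card) (hB : 3 ≤ B.card) :
    (A.card - 2) * (B.card - 2) ≤
      ((A ×ˢ B).filter fun e => e.1.val / 2 = e.2.val / 2).card := by
  revert A B
  set_option maxRecDepth 100000 in
  decide

lemma badU_laman (m n a b : ℕ) (ha : 2 ≤ a) (hb : 2 ≤ b) (hm : a + 3 ≤ m) (hn : b + 3 ≤ n) :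
    ¬ ViolatesLaman m n a b (badU m n a b) := by
  rintro ⟨S, T, hS, hT, hc⟩
  set S' := S.filter fun p => p.val < a + 3 with hS'
  set T' := T.filter fun p => p.val < b + 3 with hT'
  have hs := Finset.card_filter_le S (fun p => p.val < a + 3)
  have ht := Finset.card_filter_le T (fun p => p.val < b + 3)
  rw [← hS'] at hs
  rw [← hT'] at ht
  let H := (S' ×ˢ T').filter fun e : Fin m × Fin n =>
    e.1.val < 5 ∧ e.2.val < 5 ∧ e.1.val / 2 = e.2.val / 2
  have hcard : (badU m n a b ∩ S ×ˢ T).card + H.card ≤ S'.card * T'.card := by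
    rw [← Finset.card_product, ← Finset.card_union_of_disjoint]
    · apply Finset.card_le_card
      intro e he
      rcases Finset.mem_union.1 he with h | h
      · simp only [badU, Finset.mem_inter, Finset.mem_filter, Finset.mem_univ, true_and,
          Finset.mem_product, S', T'] at h ⊢
        tauto
      · exact (Finset.mem_filter.1 h).1
    · rw [Finset.disjoint_left]
      intro e he he'
      have h1 := (Finset.mem_filter.1 he').2
      simp only [badU, Finset.mem_inter, Finset.mem_filter, Finset.mem_univ, true_and] at he
      tauto
  by_cases h1 : S'.card ≤ a
  · nlinarith [Nat.mul_le_mul h1 ht]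
  by_cases h2 : T'.card ≤ b
  · nlinarith [Nat.mul_le_mul hs h2]
  have h3 := low_card ha hm S' (fun p hp => (Finset.mem_filter.1 hp).2)
  have h4 := low_card hb hn T' (fun p hp => (Finset.mem_filter.1 hp).2)
  set A := low (show 5 ≤ m by omega) S' with hA
  set B := low (show 5 ≤ n by omega) T' with hB
  have h5 := five_check A B (by omega) (by omega)
  have h6 : ((A ×ˢ B).filter fun e => e.1.val / 2 = e.2.val / 2).card ≤ H.card := by
    apply Finset.card_le_card_of_injOn
      (fun e => (Fin.castLE (show 5 ≤ m by omega) e.1, Fin.castLE (show 5 ≤ n by omega) e.2))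
    · rintro ⟨i, j⟩ he
      simp only [Finset.coe_filter, Finset.mem_product, Set.mem_ofPred_eq, A, B, low,
        Finset.mem_filter, Finset.mem_univ, true_and] at he
      simp only [H, Finset.coe_filter, Finset.mem_product, Set.mem_ofPred_eq, Fin.val_castLE]
      exact ⟨he.1, i.2, j.2, he.2⟩
    · rintro ⟨i, j⟩ _ ⟨i', j'⟩ _ h
      simpa [Fin.ext_iff] using h
  have h7 : (S'.card - a) * (T'.card - b) ≤ (A.card - 2) * (B.card - 2) :=
    Nat.mul_le_mul (by omega) (by omega)
  obtain ⟨i, hi⟩ := Nat.exists_eq_add_of_le (show a ≤ S'.card by omega)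
  obtain ⟨j, hj⟩ := Nat.exists_eq_add_of_le (show b ≤ T'.card by omega)
  have h8 : i * j ≤ H.card := by
    rw [hi, hj] at h7
    simp only [Nat.add_sub_cancel_left] at h7
    omega
  rw [hi, hj] at hcard
  have h9 := Nat.mul_le_mul_right b hs
  have h10 := Nat.mul_le_mul_right a ht
  rw [hi] at h9
  rw [hj] at h10
  nlinarith

lemma exists_circuit (m n a b : ℕ) (U : Finset (Fin m × Fin n))
    (hU : ¬ RigIndep m n a b (↑U : Set (Fin m × Fin n))) :
    ∃ C ⊆ U, RigCircuit m n a b C := by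
  induction U using Finset.strongInduction with
  | H U ih =>
    by_cases h : ∃ D : Finset (Fin m × Fin n), D ⊂ U ∧
        ¬ RigIndep m n a b (↑D : Set (Fin m × Fin n))
    · obtain ⟨D, hD, hD'⟩ := h
      obtain ⟨C, hC, hC'⟩ := ih D hD hD'
      exact ⟨C, hC.trans hD.subset, hC'⟩
    · push Not at h
      exact ⟨U, Finset.Subset.refl _, hU, h⟩

/-- rows missing from column `q` -/
def miss {m n : ℕ} (U : Finset (Fin m × Fin n)) (q : Fin n) : Finset (Fin m) :=
  Finset.univ.filter fun p => (p, q) ∉ U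

lemma vander_miss {m a : ℕ} (s : Finset (Fin m)) (hs : m ≤ s.card + a) (f : Fin m → ℚ)
    (hf : ∀ p ∈ s, f p = 0) (h : ∀ j, ∑ p, vd m a p j * f p = 0) : ∀ p, f p = 0 := by
  refine vander sᶜ ?_ f ?_ h
  · rw [Finset.card_compl, Fintype.card_fin]; omega
  · intro p hp
    exact hf p (by simpa using hp)

lemma sf_of_coloring {m n a b : ℕ} (U : Finset (Fin m × Fin n)) (c : Fin n → ℕ)
    (hc : ∀ q, (miss U q).card + a < m → c q < b)
    (h2 : ∀ q q', (miss U q).card + a < m → (miss U q').card + a < m → q ≠ q' → c q = c q' →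
      m ≤ (miss U q ∪ miss U q').card + a)
    (h3 : ∀ q q' q'', (miss U q).card + a < m → (miss U q').card + a < m →
      (miss U q'').card + a < m → q ≠ q' → q ≠ q'' → q' ≠ q'' → c q = c q' → c q = c q'' → False) :
    SF (vd m a) (fun q (l : Fin b) => if c q = l.val then (1 : ℚ) else 0) U := by
  intro W hU hx hy p q
  have hz : ∀ q p, p ∈ miss U q → W p q = 0 := by
    intro q p hp
    apply hU
    simpa [miss] using hp
  have hirr : ∀ q, m ≤ (miss U q).card + a → ∀ p, W p q = 0 := by
    intro q hq
    exact vander_miss (miss U q) hq (fun p => W p q) (hz q) (fun j => hx j q)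
  by_cases hq : m ≤ (miss U q).card + a
  · exact hirr q hq p
  push Not at hq
  have hy' : ∀ p, ∑ q', (if c q' = c q then W p q' else 0) = 0 := by
    intro p
    have := hy ⟨c q, hc q hq⟩ p
    simpa [ite_mul] using this
  by_cases hex : ∃ q', q' ≠ q ∧ c q' = c q ∧ (miss U q').card + a < m
  · obtain ⟨q', hne, hcq, hq'⟩ := hex
    have hsum : ∀ p, W p q = - W p q' := by
      intro p
      have h := hy' p
      rw [← Finset.sum_subset (Finset.subset_univ {q, q'}), Finset.sum_pair hne.symm] at h
      · simp only [if_true, hcq] at h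
        linarith
      · intro q'' _ hq''
        simp only [Finset.mem_insert, Finset.mem_singleton, not_or] at hq''
        split_ifs with hcc
        · apply hirr
          by_contra hlt
          push Not at hlt
          exact h3 q q' q'' hq hq' hlt hne.symm (Ne.symm hq''.1) (Ne.symm hq''.2) hcq.symm hcc.symm
        · rfl
    refine vander_miss (miss U q ∪ miss U q') (h2 q q' hq hq' hne.symm hcq.symm)
      (fun p => W p q) ?_ (fun j => hx j q) p
    intro p hp
    rcases Finset.mem_union.1 hp with h | h
    · exact hz q p h
    · rw [hsum p, hz q' p h, neg_zero]
  · push Not at hex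
    have h := hy' p
    rw [Finset.sum_eq_single q] at h
    · simpa using h
    · intro q' _ hne
      split_ifs with hcc
      · exact hirr q' (hex q' hne hcc) p
      · rfl
    · simp

lemma pairing {n B : ℕ} (T : Finset (Fin n)) (cls : Fin n → ℕ) (hT : T.card ≤ 2 * B)
    (hcls : ∀ k, (T.filter fun q => cls q = k).card ≤ B) :
    ∃ c : Fin n → ℕ, (∀ q ∈ T, c q < B) ∧
      (∀ q ∈ T, ∀ q' ∈ T, q ≠ q' → c q = c q' → cls q ≠ cls q') ∧
      (∀ q ∈ T, ∀ q' ∈ T, ∀ q'' ∈ T, q ≠ q' → q ≠ q'' → q' ≠ q'' → c q = c q' → c q = c q'' →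
        False) := by
  let k : Fin n → ℕ := fun q => n * cls q + q.val
  have kdiv : ∀ q, k q / n = cls q := by
    intro q
    have hn : 0 < n := q.pos
    simp only [k]
    rw [Nat.mul_add_div hn, Nat.div_eq_of_lt q.2, add_zero]
  have kinj : ∀ q q', k q = k q' → q = q' := by
    intro q q' h
    have h1 : cls q = cls q' := by rw [← kdiv, ← kdiv, h]
    simp only [k, h1] at h
    exact Fin.ext (by omega)
  let e : Fin n → ℕ := fun q => (T.filter fun q' => k q' < k q).card
  have elt : ∀ q ∈ T, e q < T.card := by
    intro q hq
    apply Finset.card_lt_card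
    rw [Finset.filter_ssubset]
    exact ⟨q, hq, by simp⟩
  have emono : ∀ q ∈ T, ∀ q', k q < k q' → e q < e q' := by
    intro q hq q' h
    apply Finset.card_lt_card
    rw [Finset.ssubset_iff_of_subset]
    · exact ⟨q, by simp [hq, h], by simp⟩
    · intro z hz
      simp only [Finset.mem_filter] at hz ⊢
      exact ⟨hz.1, by omega⟩
  have einj : ∀ q ∈ T, ∀ q' ∈ T, q ≠ q' → e q ≠ e q' := by
    intro q hq q' hq' hne he
    rcases lt_trichotomy (k q) (k q') with h | h | h
    · have := emono q hq q' h; omega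
    · exact hne (kinj _ _ h)
    · have := emono q' hq' q h; omega
  have key : ∀ q ∈ T, ∀ q' ∈ T, e q' = e q + B → cls q = cls q' → False := by
    intro q hq q' hq' he hcl
    have hlt : k q ≤ k q' := by
      by_contra h
      push Not at h
      have := emono q' hq' q h
      omega
    have hsub : insert q' ((T.filter fun z => k z < k q') \ (T.filter fun z => k z < k q)) ⊆
        T.filter fun z => cls z = cls q := by
      intro z hz
      rcases Finset.mem_insert.1 hz with rfl | hz
      · simp [hq', hcl]
      · simp only [Finset.mem_sdiff, Finset.mem_filter, not_and, not_lt] at hz ⊢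
        obtain ⟨⟨hzT, h1⟩, h2⟩ := hz
        refine ⟨hzT, ?_⟩
        have h3 := Nat.div_le_div_right (c := n) (h2 hzT)
        have h4 := Nat.div_le_div_right (c := n) h1.le
        rw [kdiv, kdiv] at h3 h4
        omega
    have h1 := Finset.card_le_card hsub
    rw [Finset.card_insert_of_notMem (by simp), Finset.card_sdiff_of_subset] at h1
    · have h2 := hcls (cls q)
      change e q' - e q + 1 ≤ _ at h1
      omega
    · intro z hz
      simp only [Finset.mem_filter] at hz ⊢
      exact ⟨hz.1, by omega⟩
  refine ⟨fun q => if e q < B then e q else e q - B, ?_, ?_, ?_⟩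
  · intro q hq
    have := elt q hq
    dsimp only
    split_ifs <;> omega
  · intro q hq q' hq' hne hc hcl
    have h1 := elt q hq
    have h2 := elt q' hq'
    have h3 := einj q hq q' hq' hne
    have : e q' = e q + B ∨ e q = e q' + B := by
      dsimp only at hc
      split_ifs at hc <;> omega
    rcases this with h | h
    · exact key q hq q' hq' h hcl
    · exact key q' hq' q hq h hcl.symm
  · intro q hq q' hq' q'' hq'' n1 n2 n3 hc hc'
    have h1 := elt q hq
    have h2 := elt q' hq'
    have h2' := elt q'' hq''
    have h3 := einj q hq q' hq' n1
    have h4 := einj q hq q'' hq'' n2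
    have h5 := einj q' hq' q'' hq'' n3
    dsimp only at hc hc'
    split_ifs at hc hc' <;> omega

lemma exists_index {n : ℕ} (F : Finset (Fin n)) : ∃ c : Fin n → ℕ, (∀ q ∈ F, c q < F.card) ∧
    ∀ q ∈ F, ∀ q' ∈ F, c q = c q' → q = q' := by
  refine ⟨fun q => if h : q ∈ F then (F.equivFin ⟨q, h⟩).val else 0, ?_, ?_⟩
  · intro q hq; simp [hq]
  · intro q hq q' hq' h
    simpa [hq, hq', Fin.val_inj] using h

lemma full_card {m n a b : ℕ} (U : Finset (Fin m × Fin n)) (hL : ¬ ViolatesLaman m n a b U)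
    (S : Finset (Fin m)) (hS : S.card = a + 1) (T : Finset (Fin n))
    (hT : ∀ q ∈ T, ∀ p ∈ S, (p, q) ∈ U) : T.card ≤ b := by
  by_contra hlt
  push Not at hlt
  apply hL
  refine ⟨S, T, by omega, by omega, ?_⟩
  have : U ∩ S ×ˢ T = S ×ˢ T := by
    apply Finset.inter_eq_right.2
    rintro ⟨p, q⟩ h
    rw [Finset.mem_product] at h
    exact hT q h.2 p h.1
  rw [this, Finset.card_product, hS]
  nlinarith

lemma sf_caseB {m n a b : ℕ} (ha : a ≤ m) (hm : m ≤ a + 2) (U : Finset (Fin m × Fin n))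
    (hL : ¬ ViolatesLaman m n a b U) :
    ∃ (x : Fin m → Fin a → ℚ) (y : Fin n → Fin b → ℚ), SF x y U := by
  suffices h : ∃ c : Fin n → ℕ, (∀ q, (miss U q).card + a < m → c q < b) ∧
    (∀ q q', (miss U q).card + a < m → (miss U q').card + a < m → q ≠ q' → c q = c q' →
      m ≤ (miss U q ∪ miss U q').card + a) ∧
    (∀ q q' q'', (miss U q).card + a < m → (miss U q').card + a < m →
      (miss U q'').card + a < m → q ≠ q' → q ≠ q'' → q' ≠ q'' → c q = c q' → c q = c q'' →
      False) by
    obtain ⟨c, h1, h2, h3⟩ := h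
    exact ⟨_, _, sf_of_coloring U c h1 h2 h3⟩
  rcases (show m = a ∨ m = a + 1 ∨ m = a + 2 by omega) with rfl | hm1 | hm2
  · refine ⟨fun _ => 0, ?_, ?_, ?_⟩
    · intro q h; omega
    · intro q q' h; omega
    · intro q q' q'' h; omega
  · obtain ⟨c, hc, hinj⟩ := exists_index (Finset.univ.filter fun q => (miss U q).card + a < m)
    simp only [Finset.mem_filter, Finset.mem_univ, true_and] at hc hinj
    have hcard : (Finset.univ.filter fun q => (miss U q).card + a < m).card ≤ b := by
      apply full_card U hL Finset.univ (by simpa using hm1)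
      intro q hq p _
      simp only [Finset.mem_filter, Finset.mem_univ, true_and] at hq
      by_contra hp
      have : 0 < (miss U q).card := Finset.card_pos.2 ⟨p, by simp [miss, hp]⟩
      omega
    refine ⟨c, fun q hq => (hc q hq).trans_le hcard, ?_, ?_⟩
    · intro q q' h h' hne he
      exact absurd (hinj q h q' h' he) hne
    · intro q q' q'' h h' _ hne _ _ he _
      exact absurd (hinj q h q' h' he) hne
  · set F := Finset.univ.filter fun q => (miss U q).card = 0 with hF
    set T := Finset.univ.filter fun q => (miss U q).card = 1 with hT
    have hmF : ∀ q, q ∈ F ↔ (miss U q).card = 0 := by simp [F]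
    have hmT : ∀ q, q ∈ T ↔ (miss U q).card = 1 := by simp [T]
    have hdisj : Disjoint F T := by
      rw [Finset.disjoint_left]; intro q h1 h2
      rw [hmF] at h1; rw [hmT] at h2; omega
    let cls : Fin n → ℕ := fun q => ∑ p ∈ miss U q, p.val
    have hcls : ∀ q ∈ T, ∀ p, p ∈ miss U q ↔ p.val = cls q := by
      intro q hq p
      obtain ⟨z, hz⟩ := Finset.card_eq_one.1 ((hmT q).1 hq)
      simp only [cls, hz, Finset.mem_singleton, Finset.sum_singleton, Fin.ext_iff]
    have cond1 : T.card + 2 * F.card ≤ 2 * b := by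
      have hU := Finset.card_union_of_disjoint hdisj
      by_cases hb : (F ∪ T).card ≤ b
      · omega
      · by_contra hlt
        apply hL
        refine ⟨Finset.univ, F ∪ T, by simpa using ha, by omega, ?_⟩
        have h1 : (Finset.univ : Finset (Fin m)) ×ˢ (F ∪ T) ⊆
            (U ∩ Finset.univ ×ˢ (F ∪ T)) ∪ (T.biUnion fun q => miss U q ×ˢ {q}) := by
          rintro ⟨p, q⟩ hpq
          rw [Finset.mem_product] at hpq
          by_cases hu : (p, q) ∈ U
          · apply Finset.mem_union_left
            simpa [hu] using hpq
          · apply Finset.mem_union_right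
            rw [Finset.mem_biUnion]
            refine ⟨q, ?_, by simp [miss, hu]⟩
            rcases Finset.mem_union.1 hpq.2 with h | h
            · rw [hmF, Finset.card_eq_zero] at h
              have : p ∈ miss U q := by simp [miss, hu]
              simp [h] at this
            · exact h
        have h2 := (Finset.card_le_card h1).trans (Finset.card_union_le _ _)
        have h3 : (T.biUnion fun q => miss U q ×ˢ ({q} : Finset (Fin n))).card ≤ T.card := by
          refine (Finset.card_biUnion_le_card_mul _ _ 1 ?_).trans (by simp)
          intro q hq
          rw [Finset.card_product, (hmT q).1 hq]; simp
        rw [Finset.card_product, Finset.card_univ, Fintype.card_fin] at h2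
        rw [Finset.card_univ, Fintype.card_fin]
        subst hm2
        nlinarith
    have cond2 : ∀ k, (T.filter fun q => cls q = k).card ≤ b - F.card := by
      intro k
      by_cases hk : k < m
      · have := full_card U hL (Finset.univ.erase ⟨k, hk⟩)
          (by rw [Finset.card_erase_of_mem (Finset.mem_univ _), Finset.card_univ,
                Fintype.card_fin]; omega)
          (F ∪ T.filter fun q => cls q = k) (by
            intro q hq p hp
            by_contra hu
            have hpm : p ∈ miss U q := by simp [miss, hu]
            rcases Finset.mem_union.1 hq with h | h
            · rw [hmF, Finset.card_eq_zero] at h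
              simp [h] at hpm
            · obtain ⟨hqT, hqk⟩ := Finset.mem_filter.1 h
              rw [hcls q hqT, hqk] at hpm
              exact (Finset.mem_erase.1 hp).1 (Fin.ext hpm))
        rw [Finset.card_union_of_disjoint
          (Finset.disjoint_of_subset_right (Finset.filter_subset _ _) hdisj)] at this
        omega
      · rw [Finset.card_eq_zero.2]
        · exact Nat.zero_le _
        · rw [Finset.filter_eq_empty_iff]
          intro q hq h
          obtain ⟨z, hz⟩ := Finset.card_eq_one.1 ((hmT q).1 hq)
          have := (hcls q hq z).1 (by simp [hz])
          omega
    obtain ⟨c1, hc1, hinj⟩ := exists_index F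
    obtain ⟨c2, hc2, hcol, htri⟩ := pairing (B := b - F.card) T cls (by omega) cond2
    have hcase : ∀ q, (miss U q).card + a < m → q ∈ F ∨ q ∈ T := by
      intro q hq; rw [hmF, hmT]; omega
    have hFT : ∀ q ∈ T, q ∉ F := fun q h1 h2 => (Finset.disjoint_left.1 hdisj) h2 h1
    have same : ∀ q q', (miss U q).card + a < m → (miss U q').card + a < m → q ≠ q' →
        (if q ∈ F then c1 q else F.card + c2 q) = (if q' ∈ F then c1 q' else F.card + c2 q') →
        q ∈ T ∧ q' ∈ T ∧ c2 q = c2 q' := by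
      intro q q' hq hq' hne he
      rcases hcase q hq with h | h <;> rcases hcase q' hq' with h' | h'
      · rw [if_pos h, if_pos h'] at he
        exact absurd (hinj q h q' h' he) hne
      · rw [if_pos h, if_neg (hFT _ h')] at he
        have := hc1 q h
        omega
      · rw [if_pos h', if_neg (hFT _ h)] at he
        have := hc1 q' h'
        omega
      · rw [if_neg (hFT _ h), if_neg (hFT _ h')] at he
        exact ⟨h, h', by omega⟩
    refine ⟨fun q => if q ∈ F then c1 q else F.card + c2 q, ?_, ?_, ?_⟩
    · intro q hq
      dsimp only
      rcases hcase q hq with h | h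
      · rw [if_pos h]
        have := hc1 q h
        omega
      · rw [if_neg (hFT _ h)]
        have := hc2 q h
        omega
    · intro q q' hq hq' hne he
      obtain ⟨h1, h2, h3⟩ := same q q' hq hq' hne he
      have hcl := hcol q h1 q' h2 hne h3
      rw [Finset.card_union_of_disjoint, (hmT q).1 h1, (hmT q').1 h2]
      · omega
      · rw [Finset.disjoint_left]
        intro p hp hp'
        rw [hcls q h1] at hp
        rw [hcls q' h2] at hp'
        omega
    · intro q q' q'' hq hq' hq'' n1 n2 n3 he he'
      obtain ⟨h1, h2, h3⟩ := same q q' hq hq' n1 he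
      obtain ⟨_, h5, h6⟩ := same q q'' hq hq'' n2 he'
      exact htri q h1 q' h2 q'' h5 n1 n2 n3 h3 h6

lemma generic_minors {n : ℕ} {ρ κ : Type} [Fintype ρ] [Fintype κ]
    (supp : ρ → Finset (Fin n)) (J0 : κ → Finset ρ)
    (f : ∀ i, {j // j ∉ J0 i} → Fin n) (hf : ∀ i, Function.Injective (f i))
    (hs : ∀ i (j : {j // j ∉ J0 i}), f i j ∈ supp j) :
    ∃ M : ρ → Fin n → ℚ, (∀ j q, q ∉ supp j → M j q = 0) ∧
      ∀ i, (Matrix.of fun j j' : {j // j ∉ J0 i} => M j (f i j')).det ≠ 0 := by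
  let Mg : ρ → Fin n → MvPolynomial (ρ × Fin n) ℚ := fun j q =>
    if q ∈ supp j then MvPolynomial.X (j, q) else 0
  let D : κ → MvPolynomial (ρ × Fin n) ℚ := fun i =>
    (Matrix.of fun j j' : {j // j ∉ J0 i} => Mg j (f i j')).det
  have heval : ∀ (v : ρ × Fin n → ℚ) i, MvPolynomial.eval v (D i) =
      (Matrix.of fun j j' : {j // j ∉ J0 i} => MvPolynomial.eval v (Mg j (f i j'))).det := by
    intro v i
    simp only [D]
    rw [RingHom.map_det]
    rfl
  have hD : ∀ i, D i ≠ 0 := by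
    intro i h0
    have h1 := heval (fun z => if ∃ h : z.1 ∉ J0 i, z.2 = f i ⟨z.1, h⟩ then 1 else 0) i
    rw [h0, map_zero] at h1
    have h2 : (Matrix.of fun j j' : {j // j ∉ J0 i} => MvPolynomial.eval
        (fun z => if ∃ h : z.1 ∉ J0 i, z.2 = f i ⟨z.1, h⟩ then (1 : ℚ) else 0)
          (Mg j (f i j'))) = 1 := by
      ext ⟨j, hj⟩ ⟨j', hj'⟩
      rw [Matrix.one_apply, Matrix.of_apply]
      by_cases hjj : j = j'
      · subst hjj
        simp only [Mg, hs i ⟨j, hj⟩, if_true, MvPolynomial.eval_X]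
        rw [if_pos ⟨hj, trivial⟩]
      · rw [if_neg (by simpa using hjj)]
        simp only [Mg]
        split_ifs
        · rw [MvPolynomial.eval_X, if_neg]
          rintro ⟨_, h⟩
          have := hf i h
          simp only [Subtype.mk.injEq] at this
          exact hjj this.symm
        · simp
    rw [h2, Matrix.det_one] at h1
    exact zero_ne_one h1
  have hP : (∏ i, D i) ≠ 0 := Finset.prod_ne_zero_iff.2 fun i _ => hD i
  obtain ⟨v, hv⟩ : ∃ v, MvPolynomial.eval v (∏ i, D i) ≠ 0 := by
    by_contra hc
    push Not at hc
    exact hP (MvPolynomial.funext (by simpa using hc))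
  refine ⟨fun j q => MvPolynomial.eval v (Mg j q), ?_, ?_⟩
  · intro j q h
    simp [Mg, h]
  · intro i h0
    rw [map_prod] at hv
    refine (Finset.prod_ne_zero_iff.1 hv i (Finset.mem_univ _)) ?_
    rw [heval]; exact h0

lemma hall_avoid {n b : ℕ} {ρ : Type} [Fintype ρ] (supp : ρ → Finset (Fin n))
    (hall : ∀ J : Finset ρ, J.Nonempty → J.card + b ≤ (J.biUnion supp).card)
    (J0 : Finset ρ) (Z : Finset (Fin n)) (hJ0 : ∀ j ∈ J0, supp j ⊆ Z)
    (hZ : Z.card ≤ J0.card + b) :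
    ∃ f : {j // j ∉ J0} → Fin n, Function.Injective f ∧
      ∀ j : {j // j ∉ J0}, f j ∈ supp j \ Z := by
  apply (Finset.all_card_le_biUnion_card_iff_exists_injective
    (fun j : {j // j ∉ J0} => supp j \ Z)).1
  intro s
  rcases s.eq_empty_or_nonempty with rfl | hne
  · simp
  let K : Finset ρ := s.map (Function.Embedding.subtype _)
  have hK : K.card = s.card := Finset.card_map _
  have hdis : Disjoint K J0 := by
    rw [Finset.disjoint_left]
    intro j hj
    simp only [K, Finset.mem_map, Function.Embedding.subtype_apply] at hj
    obtain ⟨z, _, rfl⟩ := hj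
    exact z.2
  have h1 := hall (K ∪ J0) (by
    obtain ⟨z, hz⟩ := hne
    exact ⟨z.1, Finset.mem_union_left _ (by
      simp only [K, Finset.mem_map, Function.Embedding.subtype_apply]; exact ⟨z, hz, rfl⟩)⟩)
  rw [Finset.card_union_of_disjoint hdis, hK] at h1
  have h2 : (K ∪ J0).biUnion supp ⊆ (s.biUnion fun j => supp j \ Z) ∪ Z := by
    intro q hq
    by_cases hqZ : q ∈ Z
    · exact Finset.mem_union_right _ hqZ
    apply Finset.mem_union_left
    rw [Finset.mem_biUnion] at hq ⊢
    obtain ⟨j, hj, hq⟩ := hq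
    rcases Finset.mem_union.1 hj with h | h
    · simp only [K, Finset.mem_map, Function.Embedding.subtype_apply] at h
      obtain ⟨z, hz, rfl⟩ := h
      exact ⟨z, hz, Finset.mem_sdiff.2 ⟨hq, hqZ⟩⟩
    · exact absurd (hJ0 j h hq) hqZ
  have h3 := (Finset.card_le_card h2).trans (Finset.card_union_le _ _)
  omega

lemma laman_count {m n b : ℕ} (U : Finset (Fin m × Fin n)) (hL : ¬ ViolatesLaman m n 1 b U)
    (N : Fin m → Finset (Fin n)) (hN : ∀ p q, q ∈ N p ↔ (p, q) ∈ U)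
    (I : Finset (Fin m)) (hI : I.Nonempty) (hb : ∀ p ∈ I, b ≤ (N p).card) :
    ∑ p ∈ I, ((N p).card - b) + b ≤ (I.biUnion N).card := by
  by_contra hlt
  push Not at hlt
  apply hL
  have h1 : (I.biUnion fun p => ({p} : Finset (Fin m)) ×ˢ N p) ⊆ U ∩ I ×ˢ (I.biUnion N) := by
    rintro ⟨p, q⟩ h
    simp only [Finset.mem_biUnion, Finset.mem_product, Finset.mem_singleton] at h
    obtain ⟨p', hp', rfl, hq⟩ := h
    rw [Finset.mem_inter, Finset.mem_product, Finset.mem_biUnion]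
    exact ⟨(hN _ _).1 hq, hp', p, hp', hq⟩
  have h2 := Finset.card_le_card h1
  rw [Finset.card_biUnion] at h2
  · simp only [Finset.card_product, Finset.card_singleton, one_mul] at h2
    have h3 : ∑ p ∈ I, (N p).card = ∑ p ∈ I, ((N p).card - b) + I.card * b := by
      rw [← smul_eq_mul, ← Finset.sum_const, ← Finset.sum_add_distrib]
      apply Finset.sum_congr rfl
      intro p hp
      have := hb p hp
      omega
    refine ⟨I, I.biUnion N, Finset.card_pos.2 hI, ?_, ?_⟩
    · obtain ⟨p, hp⟩ := hI
      exact (hb p hp).trans (Finset.card_le_card (Finset.subset_biUnion_of_mem N hp))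
    · omega
  · intro p _ p' _ hne
    rw [Function.onFun, Finset.disjoint_left]
    rintro ⟨z, q⟩ hz hz'
    simp only [Finset.mem_product, Finset.mem_singleton] at hz hz'
    exact hne (hz.1.symm.trans hz'.1)

lemma exists_dual {n b : ℕ} (V : Submodule ℚ (Fin n → ℚ)) (hV : Module.finrank ℚ V + b = n) :
    ∃ y : Fin n → Fin b → ℚ, ∀ w : Fin n → ℚ, (∀ l, ∑ q, y q l * w q = 0) → w ∈ V := by
  have h1 : Module.finrank ℚ ((Fin n → ℚ) ⧸ V) = Module.finrank ℚ (Fin b → ℚ) := by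
    have := Submodule.finrank_quotient_add_finrank V
    simp only [Module.finrank_fin_fun] at this ⊢
    omega
  let e := LinearEquiv.ofFinrankEq _ _ h1
  let φ : (Fin n → ℚ) →ₗ[ℚ] (Fin b → ℚ) := e.toLinearMap ∘ₗ V.mkQ
  refine ⟨fun q l => φ (fun i => if q = i then 1 else 0) l, ?_⟩
  intro w hw
  have h2 : φ w = 0 := by
    funext l
    refine Eq.trans ?_ (hw l)
    rw [LinearMap.pi_apply_eq_sum_univ φ w, Finset.sum_apply]
    apply Finset.sum_congr rfl
    intro q _
    rw [Pi.smul_apply, smul_eq_mul, mul_comm]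
  have h3 : V.mkQ w = 0 := by
    apply e.injective
    rw [map_zero]; exact h2
  simpa using h3

lemma sf_core {m n b : ℕ} (U : Finset (Fin m × Fin n)) {ρ : Type} [Fintype ρ]
    (N : Fin m → Finset (Fin n)) (hN : ∀ p q, q ∈ N p ↔ (p, q) ∈ U)
    (supp : ρ → Finset (Fin n)) (hρ : Fintype.card ρ + b = n)
    (hall : ∀ J : Finset ρ, J.Nonempty → J.card + b ≤ (J.biUnion supp).card)
    (own : ρ → Option (Fin m)) (hown : ∀ j p, own j = some p → supp j = N p)
    (hcard : ∀ p, (N p).card ≤ (Finset.univ.filter fun j => own j = some p).card + b) :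
    ∃ (x : Fin m → Fin 1 → ℚ) (y : Fin n → Fin b → ℚ), SF x y U := by
  obtain ⟨J0, hJn, hJs⟩ : ∃ J0 : Option (Fin m) → Finset ρ, J0 none = ∅ ∧
      ∀ p, J0 (some p) = Finset.univ.filter fun j => own j = some p :=
    ⟨fun o => match o with
      | none => ∅
      | some p => Finset.univ.filter fun j => own j = some p, rfl, fun _ => rfl⟩
  obtain ⟨Z, hZn, hZs⟩ : ∃ Z : Option (Fin m) → Finset (Fin n), Z none = ∅ ∧
      ∀ p, Z (some p) = N p :=
    ⟨fun o => match o with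
      | none => ∅
      | some p => N p, rfl, fun _ => rfl⟩
  have hmem : ∀ p j, j ∈ J0 (some p) ↔ own j = some p := by
    intro p j
    simp [hJs]
  have hJZ : ∀ i, ∀ j ∈ J0 i, supp j ⊆ Z i := by
    rintro (_ | p)
    · simp [hJn]
    · intro j hj
      rw [hmem] at hj
      rw [hZs, hown j p hj]
  have hf : ∀ i, ∃ f : {j // j ∉ J0 i} → Fin n, Function.Injective f ∧
      ∀ j : {j // j ∉ J0 i}, f j ∈ supp j \ Z i := by
    intro i
    apply hall_avoid (b := b) supp hall _ _ (hJZ i)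
    rcases i with _ | p
    · simp [hZn]
    · rw [hZs, hJs]; exact hcard p
  choose f hfi hfs using hf
  obtain ⟨M, hM0, hM⟩ := generic_minors supp J0 f hfi
    (fun i j => (Finset.mem_sdiff.1 (hfs i j)).1)
  let L : (ρ → ℚ) →ₗ[ℚ] (Fin n → ℚ) := Matrix.vecMulLinear (Matrix.of M)
  have hLa : ∀ c q, L c q = ∑ j, c j * M j q := by
    intro c q
    simp [L, Matrix.vecMul, dotProduct]
  -- the key vanishing
  have hkey : ∀ i (c : ρ → ℚ), (∀ q, q ∉ Z i → L c q = 0) → ∀ j, j ∉ J0 i → c j = 0 := by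
    intro i c hc j hj
    have h1 : Matrix.vecMul (fun j : {j // j ∉ J0 i} => c j)
        (Matrix.of fun j j' : {j // j ∉ J0 i} => M j (f i j')) = 0 := by
      funext j'
      have h2 := hc (f i j') (Finset.mem_sdiff.1 (hfs i j')).2
      rw [hLa] at h2
      rw [Pi.zero_apply, ← h2]
      simp only [Matrix.vecMul, dotProduct, Matrix.of_apply]
      rw [← Finset.sum_subtype (Finset.univ.filter fun j => j ∉ J0 i) (by simp)
        (fun j => c j * M j (f i j'))]
      apply Finset.sum_subset (Finset.filter_subset _ _)
      intro j _ hj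
      simp only [Finset.mem_filter, Finset.mem_univ, true_and, not_not] at hj
      rw [hM0 j _ (fun h => (Finset.mem_sdiff.1 (hfs i j')).2 (hJZ i j hj h)), mul_zero]
    exact congrFun (Matrix.eq_zero_of_vecMul_eq_zero (hM i) h1) ⟨j, hj⟩
  have hLinj : ∀ c, L c = 0 → c = 0 := by
    intro c hc
    funext j
    exact hkey none c (fun q _ => by rw [hc]; rfl) j (by simp [hJn])
  obtain ⟨y, hy⟩ := exists_dual (b := b) (LinearMap.range L) (by
    rw [LinearMap.finrank_range_of_inj]
    · simpa using hρ
    · exact (injective_iff_map_eq_zero L).2 hLinj)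
  refine ⟨fun _ _ => 1, y, ?_⟩
  intro W hU hx hyW
  have hC : ∀ p, ∃ c, L c = W p := fun p => hy (W p) (fun l => hyW l p)
  choose C hC using hC
  have hC0 : ∀ p j, j ∉ J0 (some p) → C p j = 0 := by
    intro p
    apply hkey
    intro q hq
    rw [hC]
    apply hU
    rw [← hN, ← hZs]; exact hq
  have hsum : ∑ p, C p = 0 := by
    apply hLinj
    rw [map_sum]
    funext q
    rw [Finset.sum_apply]
    simp_rw [hC]
    have := hx 0 q
    simpa using this
  have hCz : ∀ p, C p = 0 := by
    intro p
    funext j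
    by_cases hj : j ∈ J0 (some p)
    · have h1 := congrFun hsum j
      rw [Finset.sum_apply, Finset.sum_eq_single p] at h1
      · exact h1
      · intro p' _ hne
        apply hC0
        rw [hmem] at hj ⊢
        rw [hj]
        intro h
        exact hne (Option.some_injective _ h).symm
      · simp
    · exact hC0 p j hj
  intro p q
  rw [← hC, hCz, map_zero]; rfl

lemma sf_a_one {m n b : ℕ} (hb : b ≤ n) (U : Finset (Fin m × Fin n))
    (hL : ¬ ViolatesLaman m n 1 b U) :
    ∃ (x : Fin m → Fin 1 → ℚ) (y : Fin n → Fin b → ℚ), SF x y U := by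
  let N : Fin m → Finset (Fin n) := fun p => Finset.univ.filter fun q => (p, q) ∈ U
  have hN : ∀ p q, q ∈ N p ↔ (p, q) ∈ U := by simp [N]
  let r : Fin m → ℕ := fun p => (N p).card - b
  have hcount : ∀ I : Finset (Fin m), I.Nonempty → (∀ p ∈ I, b ≤ (N p).card) →
      ∑ p ∈ I, r p + b ≤ (I.biUnion N).card := laman_count U hL N hN
  have hR : ∑ p, r p + b ≤ n := by
    have h1 : ∑ p, r p = ∑ p ∈ Finset.univ.filter (fun p => b ≤ (N p).card), r p := by
      symm
      apply Finset.sum_subset (Finset.subset_univ _)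
      intro p _ hp
      simp only [Finset.mem_filter, Finset.mem_univ, true_and] at hp
      simp only [r]; omega
    rw [h1]
    rcases (Finset.univ.filter (fun p => b ≤ (N p).card)).eq_empty_or_nonempty with h | h
    · rw [h]; simpa using hb
    · refine (hcount _ h (by simp)).trans ?_
      simpa using Finset.card_le_univ ((Finset.univ.filter (fun p => b ≤ (N p).card)).biUnion N)
  let ρ := (Σ p : Fin m, Fin (r p)) ⊕ Fin (n - b - ∑ p, r p)
  have hρ : Fintype.card ρ + b = n := by
    simp only [ρ, Fintype.card_sum, Fintype.card_sigma, Fintype.card_fin]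
    omega
  let supp : ρ → Finset (Fin n) := Sum.elim (fun z => N z.1) (fun _ => Finset.univ)
  have hall : ∀ J : Finset ρ, J.Nonempty → J.card + b ≤ (J.biUnion supp).card := by
    intro J hJ
    by_cases hex : ∃ t, Sum.inr t ∈ J
    · obtain ⟨t, ht⟩ := hex
      have h1 : J.biUnion supp = Finset.univ := by
        apply Finset.eq_univ_of_forall
        intro q
        rw [Finset.mem_biUnion]
        exact ⟨_, ht, by simp [supp]⟩
      rw [h1, Finset.card_univ, Fintype.card_fin]
      have := Finset.card_le_univ J
      omega
    · push Not at hex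
      let I : Finset (Fin m) := Finset.univ.filter fun p => ∃ c, Sum.inl ⟨p, c⟩ ∈ J
      have h1 : J ⊆ (I.sigma (fun p => (Finset.univ : Finset (Fin (r p))))).map
          Function.Embedding.inl := by
        intro j hj
        rcases j with ⟨p, c⟩ | t
        · simp only [Finset.mem_map, Finset.mem_sigma, Finset.mem_univ, and_true]
          refine ⟨⟨p, c⟩, ?_, rfl⟩
          simp only [I, Finset.mem_filter, Finset.mem_univ, true_and]
          exact ⟨c, hj⟩
        · exact absurd hj (hex t)
      have h2 := Finset.card_le_card h1
      simp only [Finset.card_map, Finset.card_sigma, Finset.card_univ, Fintype.card_fin] at h2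
      have h3 := hcount I (by
        obtain ⟨j, hj⟩ := hJ
        rcases j with ⟨p, c⟩ | t
        · exact ⟨p, by simp only [I, Finset.mem_filter, Finset.mem_univ, true_and]; exact ⟨c, hj⟩⟩
        · exact absurd hj (hex t)) (by
        intro p hp
        simp only [I, Finset.mem_filter, Finset.mem_univ, true_and] at hp
        obtain ⟨c, _⟩ := hp
        have := c.pos
        simp only [r] at this
        omega)
      have h4 : I.biUnion N ⊆ J.biUnion supp := by
        intro q hq
        rw [Finset.mem_biUnion] at hq ⊢
        obtain ⟨p, hp, hq⟩ := hq
        simp only [I, Finset.mem_filter, Finset.mem_univ, true_and] at hp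
        obtain ⟨c, hc⟩ := hp
        exact ⟨_, hc, by simpa [supp] using hq⟩
      have h5 := Finset.card_le_card h4
      omega
  refine sf_core U N hN supp hρ hall (Sum.elim (fun z => some z.1) (fun _ => none)) ?_ ?_
  · rintro (z | t) p h
    · simp only [Sum.elim_inl, Option.some.injEq] at h
      simp [supp, h]
    · simp at h
  · intro p
    have h1 : r p ≤ (Finset.univ.filter fun j : ρ =>
        (Sum.elim (fun z => some z.1) (fun _ => none) j : Option (Fin m)) = some p).card := by
      have := Finset.card_le_card_of_injOn (s := (Finset.univ : Finset (Fin (r p))))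
        (t := Finset.univ.filter fun j : ρ =>
        (Sum.elim (fun z => some z.1) (fun _ => none) j : Option (Fin m)) = some p)
        (fun c => Sum.inl ⟨p, c⟩) (by intro c _; simp)
        (by intro c _ c' _ h; simpa [ρ] using h)
      simpa using this
    simp only [r] at h1 ⊢
    omega

lemma sf_a_zero {m n b : ℕ} (hb : b ≤ n) (U : Finset (Fin m × Fin n))
    (hL : ¬ ViolatesLaman m n 0 b U) :
    ∃ (x : Fin m → Fin 0 → ℚ) (y : Fin n → Fin b → ℚ), SF x y U := by
  refine ⟨fun _ _ => 0, vd n b, ?_⟩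
  intro W hU hx hy p q
  refine vander (Finset.univ.filter fun q => (p, q) ∈ U) ?_ (W p) ?_ (fun l => hy l p) q
  · by_contra hlt
    push Not at hlt
    apply hL
    refine ⟨{p}, Finset.univ, Nat.zero_le _, by simpa using hb, ?_⟩
    have h1 : (Finset.univ.filter fun q => (p, q) ∈ U).map
        ⟨fun q => (p, q), fun q q' h => by simpa using h⟩ ⊆ U ∩ {p} ×ˢ Finset.univ := by
      intro e he
      simp only [Finset.mem_map, Finset.mem_filter, Finset.mem_univ, true_and,
        ] at he
      obtain ⟨q, hq, rfl⟩ := he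
      rw [Finset.mem_inter, Finset.mem_product]
      exact ⟨hq, Finset.mem_singleton_self p, Finset.mem_univ _⟩
    have h2 := Finset.card_le_card h1
    rw [Finset.card_map] at h2
    simp only [Finset.card_singleton]
    omega
  · intro q hq
    apply hU
    simpa using hq

lemma sf_half {m n a b : ℕ} (ha : a ≤ m) (hb : b ≤ n) (h : a ≤ 1 ∨ m ≤ a + 2)
    (U : Finset (Fin m × Fin n)) (hL : ¬ ViolatesLaman m n a b U) :
    ∃ (x : Fin m → Fin a → ℚ) (y : Fin n → Fin b → ℚ), SF x y U := by
  rcases h with h | h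
  · rcases (show a = 0 ∨ a = 1 by omega) with rfl | rfl
    · exact sf_a_zero hb U hL
    · exact sf_a_one hb U hL
  · exact sf_caseB ha h U hL

lemma sf_all {m n a b : ℕ} (ha : a ≤ m) (hb : b ≤ n)
    (h : a ≤ 1 ∨ b ≤ 1 ∨ m ≤ a + 2 ∨ n ≤ b + 2)
    (U : Finset (Fin m × Fin n)) (hL : ¬ ViolatesLaman m n a b U) :
    ∃ (x : Fin m → Fin a → ℚ) (y : Fin n → Fin b → ℚ), SF x y U := by
  by_cases h1 : a ≤ 1 ∨ m ≤ a + 2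
  · exact sf_half ha hb h1 U hL
  · obtain ⟨y, x, hs⟩ := sf_half hb ha (show b ≤ 1 ∨ n ≤ b + 2 by omega)
      (U.map (Equiv.prodComm _ _).toEmbedding) (fun h => hL (viol_swap U h))
    exact ⟨x, y, sf_swap x y U hs⟩

theorem all_circuits_laman_iff (m n a b : ℕ) (ha : a ≤ m) (hb : b ≤ n) :
    (∀ C : Finset (Fin m × Fin n), RigCircuit m n a b C → ViolatesLaman m n a b C) ↔
      (a ≤ 1 ∨ b ≤ 1 ∨ m ≤ a + 2 ∨ n ≤ b + 2) := by
  constructor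
  · intro h
    by_contra hc
    have h1 := badU_dep m n a b (by omega) (by omega) (by omega) (by omega)
    rw [← rigIndep_iff] at h1
    obtain ⟨C, hCU, hC⟩ := exists_circuit m n a b _ h1
    exact badU_laman m n a b (by omega) (by omega) (by omega) (by omega)
      (viol_mono hCU (h C hC))
  · intro h C hC
    by_contra hL
    obtain ⟨x, y, hs⟩ := sf_all ha hb h C hL
    exact hC.1 ((rigIndep_iff m n a b C).2 (sf_generic x y C hs))
end
end

section
/- Let 0 ≤ a ≤ m and 0 ≤ b ≤ n, and let G ⊆ [m]×[n]. Define the left cone C_L G = G ∪ ({m+1}×[n]) ⊆ [m+1]×[n]. Then G is independent in the bipartite rigidity matroid B_{m,n}(a,b) if and only if C_L G is independent in the bipartite rigidity matroid B_{m+1,n}(a+1,b). -/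
open scoped Classical

noncomputable section

/-- The left cone of `G ⊆ [m]×[n]`: add a new left vertex joined to every vertex of
`[n]`. -/
def leftCone {m n : ℕ} (G : Set (Fin m × Fin n)) : Set (Fin (m + 1) × Fin n) :=
  (fun p : Fin m × Fin n => ((p.1.castSucc : Fin (m + 1)), p.2)) '' G ∪
    {p : Fin (m + 1) × Fin n | p.1 = Fin.last m}

/-- The rigidity column at given points of a field. -/
def pcol {K : Type*} [CommRing K] {m n a b : ℕ} (x : Fin m → Fin a → K) (y : Fin n → Fin b → K)
    (e : Fin m × Fin n) : (Fin a × Fin n) ⊕ (Fin b × Fin m) → K := fun row =>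
  match row with
  | Sum.inl (j, k) => if e.2 = k then x e.1 j else 0
  | Sum.inr (l, i) => if e.1 = i then y e.2 l else 0

lemma linIndep_weights {K V : Type*} [Field K] [AddCommGroup V] [Module K V] {ι : Type*} [Fintype ι]
    (G : Set ι) (v : ι → V) :
    LinearIndependent K (fun e : G => v e) ↔
      ∀ w : ι → K, (∀ e, e ∉ G → w e = 0) → ∑ e, w e • v e = 0 → ∀ e, w e = 0 := by
  have key : ∀ w : ι → K, (∀ e, e ∉ G → w e = 0) →
      ∑ e : G, w e • v e = ∑ e, w e • v e := by
    intro w hw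
    refine Eq.trans (Finset.sum_subtype (Finset.univ.filter (fun e => e ∈ G)) (p := fun e => e ∈ G)
      (by simp) (fun e => w e • v e)).symm ?_
    apply Finset.sum_subset (Finset.subset_univ _)
    intro e _ he
    rw [hw e (by simpa using he), zero_smul]
  rw [Fintype.linearIndependent_iff]
  constructor
  · intro h w hw hs e
    by_cases he : e ∈ G
    · exact h (fun e => w e) (by rw [key w hw, hs]) ⟨e, he⟩
    · exact hw e he
  · intro h g hg e
    have hw : ∀ e, e ∉ G → (fun e => if he : e ∈ G then g ⟨e, he⟩ else 0) e = 0 := by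
      intro e he; simp [he]
    have := h _ hw (by rw [← key _ hw, ← hg]; simp) e
    simpa using this

lemma pcol_iff {K : Type*} [Field K] {m n a b : ℕ} (x : Fin m → Fin a → K) (y : Fin n → Fin b → K)
    (G : Set (Fin m × Fin n)) :
    LinearIndependent K (fun e : G => pcol x y e) ↔
      ∀ w : Fin m → Fin n → K, (∀ p q, (p, q) ∉ G → w p q = 0) →
        (∀ j k, ∑ p, w p k * x p j = 0) → (∀ l i, ∑ q, w i q * y q l = 0) →
        ∀ p q, w p q = 0 := by
  rw [linIndep_weights G (pcol x y)]
  have key : ∀ w : Fin m × Fin n → K, (∑ e, w e • pcol x y e = 0) ↔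
      (∀ j k, ∑ p, w (p, k) * x p j = 0) ∧ (∀ l i, ∑ q, w (i, q) * y q l = 0) := by
    intro w
    have h1 : ∀ j k, (∑ e, w e • pcol x y e) (Sum.inl (j, k)) = ∑ p, w (p, k) * x p j := by
      intro j k
      simp [Finset.sum_apply, pcol, Fintype.sum_prod_type]
    have h2 : ∀ l i, (∑ e, w e • pcol x y e) (Sum.inr (l, i)) = ∑ q, w (i, q) * y q l := by
      intro l i
      simp [Finset.sum_apply, pcol, Fintype.sum_prod_type_right]
    constructor
    · intro h
      exact ⟨fun j k => by rw [← h1, h]; rfl, fun l i => by rw [← h2, h]; rfl⟩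
    · rintro ⟨ha, hb⟩
      funext r
      rcases r with ⟨j, k⟩ | ⟨l, i⟩
      · rw [h1, ha]; rfl
      · rw [h2, hb]; rfl
  constructor
  · intro h w hw h1 h2 p q
    exact h (fun e => w e.1 e.2) (fun e he => hw _ _ he) ((key _).2 ⟨h1, h2⟩) (p, q)
  · intro h w hw hs e
    obtain ⟨h1, h2⟩ := (key w).1 hs
    exact h (fun p q => w (p, q)) (fun p q he => hw _ he) h1 h2 e.1 e.2

lemma mem_leftCone_castSucc {m n : ℕ} (G : Set (Fin m × Fin n)) (p : Fin m) (q : Fin n) :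
    (p.castSucc, q) ∈ leftCone G ↔ (p, q) ∈ G := by
  simp [leftCone, (Fin.castSucc_lt_last p).ne]

lemma mem_leftCone_last {m n : ℕ} (G : Set (Fin m × Fin n)) (q : Fin n) :
    (Fin.last m, q) ∈ leftCone G := by
  simp [leftCone]

lemma cone_points {K : Type*} [Field K] {m n a b : ℕ} (x : Fin (m + 1) → Fin (a + 1) → K)
    (y : Fin n → Fin b → K) (hT : x (Fin.last m) (Fin.last a) ≠ 0) (G : Set (Fin m × Fin n)) :
    LinearIndependent K (fun e : G => pcol (fun (p : Fin m) (j : Fin a) =>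
        x p.castSucc j.castSucc - x p.castSucc (Fin.last a) *
          (x (Fin.last m) j.castSucc / x (Fin.last m) (Fin.last a))) y e) ↔
      LinearIndependent K (fun e : leftCone G => pcol x y e) := by
  rw [pcol_iff, pcol_iff]
  have expand : ∀ (w : Fin m → Fin n → K) (j : Fin a) (k : Fin n),
      ∑ p, w p k * (x p.castSucc j.castSucc - x p.castSucc (Fin.last a) *
          (x (Fin.last m) j.castSucc / x (Fin.last m) (Fin.last a))) =
      ∑ p, w p k * x p.castSucc j.castSucc - (∑ p, w p k * x p.castSucc (Fin.last a)) *
          (x (Fin.last m) j.castSucc / x (Fin.last m) (Fin.last a)) := by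
    intro w j k
    rw [Finset.sum_mul, ← Finset.sum_sub_distrib]
    exact Finset.sum_congr rfl fun p _ => by ring
  constructor
  · intro h w hw h1 h2
    have h0 : ∀ p q, w (Fin.castSucc p) q = 0 := by
      apply h (fun p q => w p.castSucc q)
      · intro p q hpq
        exact hw _ _ (fun hh => hpq ((mem_leftCone_castSucc G p q).1 hh))
      · intro j k
        rw [expand (fun p q => w p.castSucc q)]
        have e1 := h1 j.castSucc k
        have e2 := h1 (Fin.last a) k
        rw [Fin.sum_univ_castSucc] at e1 e2
        rw [eq_neg_of_add_eq_zero_left e1, eq_neg_of_add_eq_zero_left e2]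
        field_simp
        ring
      · intro l i
        exact h2 l i.castSucc
    intro p q
    refine Fin.lastCases ?_ (fun p => h0 p q) p
    have e2 := h1 (Fin.last a) q
    rw [Fin.sum_univ_castSucc] at e2
    simpa [h0, hT] using e2
  · intro h w hw h1 h2 p q
    set u : Fin n → K := fun k => -(∑ p, w p k * x p.castSucc (Fin.last a)) /
      x (Fin.last m) (Fin.last a) with hu
    have := h (Fin.snoc (α := fun _ => Fin n → K) w u) ?_ ?_ ?_ p.castSucc q
    · simpa using this
    · intro p q
      refine Fin.lastCases ?_ (fun p => ?_) p
      · intro hh; exact absurd (mem_leftCone_last G q) hh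
      · intro hh
        rw [mem_leftCone_castSucc] at hh
        simpa using hw p q hh
    · intro j k
      rw [Fin.sum_univ_castSucc]
      simp only [Fin.snoc_castSucc, Fin.snoc_last]
      refine Fin.lastCases ?_ (fun j => ?_) j
      · simp only [hu]
        field_simp
        ring
      · have := h1 j k
        rw [expand] at this
        rw [sub_eq_zero.1 this]
        simp only [hu]
        field_simp
        ring
    · intro l i
      refine Fin.lastCases ?_ (fun i => ?_) i
      · simp only [Fin.snoc_last, hu]
        have e : ∀ q, -(∑ p, w p q * x p.castSucc (Fin.last a)) / x (Fin.last m) (Fin.last a) * y q l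
            = ∑ p, (-(x p.castSucc (Fin.last a)) / x (Fin.last m) (Fin.last a)) *
              (w p q * y q l) := by
          intro q
          rw [neg_div, neg_mul, div_mul_eq_mul_div, Finset.sum_mul, Finset.sum_div,
            ← Finset.sum_neg_distrib]
          exact Finset.sum_congr rfl fun p _ => by ring
        rw [Finset.sum_congr rfl fun q _ => e q, Finset.sum_comm]
        apply Finset.sum_eq_zero
        intro p _
        rw [← Finset.mul_sum, h2 l p, mul_zero]
      · simpa using h2 l i

/-- Polynomial ring. -/
abbrev RPoly (m n a b : ℕ) := MvPolynomial ((Fin m × Fin a) ⊕ (Fin n × Fin b)) ℚ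

lemma pcol_gen {L : Type*} [Field L] {m n a b : ℕ} (ψ : RPoly m n a b →+* L)
    (hψ : Function.Injective ψ) (G : Set (Fin m × Fin n)) :
    LinearIndependent L (fun e : G =>
      pcol (fun p j => ψ (MvPolynomial.X (Sum.inl (p, j))))
        (fun q l => ψ (MvPolynomial.X (Sum.inr (q, l)))) e) ↔
      LinearIndependent (RPoly m n a b) (fun e : G =>
        pcol (K := RPoly m n a b) (fun p j => MvPolynomial.X (Sum.inl (p, j)))
        (fun q l => MvPolynomial.X (Sum.inr (q, l))) e) := by
  let : Algebra (RPoly m n a b) L := ψ.toAlgebra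
  have : FaithfulSMul (RPoly m n a b) L := (faithfulSMul_iff_algebraMap_injective _ _).2 hψ
  rw [← linearIndependent_algebraMap_comp_iff (R := RPoly m n a b) (S := L)]
  have : ∀ e : G, pcol (fun p j => ψ (MvPolynomial.X (Sum.inl (p, j))))
        (fun q l => ψ (MvPolynomial.X (Sum.inr (q, l)))) (e : Fin m × Fin n) =
      algebraMap (RPoly m n a b) L ∘ pcol (K := RPoly m n a b)
        (fun p j => MvPolynomial.X (Sum.inl (p, j)))
        (fun q l => MvPolynomial.X (Sum.inr (q, l))) e := by
    intro e
    have hm : ∀ r, algebraMap (RPoly m n a b) L r = ψ r := fun _ => rfl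
    funext r
    rcases r with ⟨j, k⟩ | ⟨l, i⟩
    · simp only [pcol, Function.comp, hm]
      split_ifs <;> simp
    · simp only [pcol, Function.comp, hm]
      split_ifs <;> simp
  simp only [this]

lemma rigCol_eq_s11 (m n a b : ℕ) (e : Fin m × Fin n) : rigCol m n a b e =
    pcol (fun p j => algebraMap (RPoly m n a b) (RField m n a b) (MvPolynomial.X (Sum.inl (p, j))))
      (fun q l => algebraMap (RPoly m n a b) (RField m n a b) (MvPolynomial.X (Sum.inr (q, l)))) e := by
  funext r
  rcases r with ⟨j, k⟩ | ⟨l, i⟩ <;> rfl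

lemma rigIndep_iff_s11 {K : Type*} [Field K] {m n a b : ℕ} (φ : RPoly m n a b →+* K)
    (hφ : Function.Injective φ) (G : Set (Fin m × Fin n)) :
    RigIndep m n a b G ↔ LinearIndependent K (fun e : G =>
      pcol (fun p j => φ (MvPolynomial.X (Sum.inl (p, j))))
        (fun q l => φ (MvPolynomial.X (Sum.inr (q, l)))) e) := by
  rw [pcol_gen φ hφ, ← pcol_gen (algebraMap (RPoly m n a b) (RField m n a b))
    (IsFractionRing.injective _ _)]
  simp only [RigIndep, rigCol_eq_s11]

lemma exists_generic {m n a b : ℕ} {F : Type*} [Field F] (ι : RPoly (m + 1) n (a + 1) b →+* F)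
    (hinjF : Function.Injective ι) : ∃ φ : RPoly m n a b →+* F,
    Function.Injective φ ∧
    (∀ p j, φ (MvPolynomial.X (Sum.inl (p, j))) =
      ι (MvPolynomial.X (Sum.inl (p.castSucc, j.castSucc))) -
      ι (MvPolynomial.X (Sum.inl (p.castSucc, Fin.last a))) *
      (ι (MvPolynomial.X (Sum.inl (Fin.last m, j.castSucc))) /
      ι (MvPolynomial.X (Sum.inl (Fin.last m, Fin.last a))))) ∧
    (∀ q l, φ (MvPolynomial.X (Sum.inr (q, l))) =
      ι (MvPolynomial.X (Sum.inr (q, l)))) := by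
  set T : RPoly (m + 1) n (a + 1) b := MvPolynomial.X (Sum.inl (Fin.last m, Fin.last a)) with hTdef
  have hT : ι T ≠ 0 := by
    rw [Ne, map_eq_zero_iff _ hinjF]
    exact MvPolynomial.X_ne_zero _
  let L := Localization.Away T
  let A : RPoly (m + 1) n (a + 1) b →+* L := algebraMap _ _
  let toF : L →+* F := IsLocalization.Away.lift T (g := ι) hT.isUnit
  have toF_A : ∀ r, toF (A r) = ι r := IsLocalization.Away.lift_eq T hT.isUnit
  have hAinj : Function.Injective A := by
    intro r s h
    apply hinjF
    rw [← toF_A, ← toF_A, h]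
  have toF_inj : Function.Injective toF := by
    refine (IsLocalization.lift_injective_iff _).2 fun r s => ?_
    exact ⟨fun h => congrArg _ (hAinj h), fun h => congrArg _ (hinjF h)⟩
  -- specialisation
  let sp : RPoly (m + 1) n (a + 1) b →+* RPoly m n a b :=
    (MvPolynomial.aeval (R := ℚ) (Sum.elim
      (fun pj : Fin (m + 1) × Fin (a + 1) =>
        Fin.lastCases (motive := fun _ => RPoly m n a b)
          (Fin.lastCases (motive := fun _ => RPoly m n a b) 1 (fun _ => 0) pj.2)
          (fun p => Fin.lastCases (motive := fun _ => RPoly m n a b) 0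
            (fun j => MvPolynomial.X (Sum.inl (p, j))) pj.2) pj.1)
      (fun ql => MvPolynomial.X (Sum.inr ql)))).toRingHom
  have spT : sp T = 1 := by simp [sp, T]
  let spL : L →+* RPoly m n a b :=
    IsLocalization.Away.lift T (g := sp) (by rw [spT]; exact isUnit_one)
  have spL_A : ∀ r, spL (A r) = sp r := IsLocalization.Away.lift_eq T _
  let φL : RPoly m n a b →ₐ[ℚ] L := MvPolynomial.aeval (Sum.elim
    (fun pj => A (MvPolynomial.X (Sum.inl (pj.1.castSucc, pj.2.castSucc))) -
      A (MvPolynomial.X (Sum.inl (pj.1.castSucc, Fin.last a))) *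
      (A (MvPolynomial.X (Sum.inl (Fin.last m, pj.2.castSucc))) * IsLocalization.Away.invSelf T))
    (fun ql => A (MvPolynomial.X (Sum.inr ql))))
  have hinv : A T * IsLocalization.Away.invSelf T = 1 := IsLocalization.Away.mul_invSelf T
  have hcomp : spL.comp φL.toRingHom = RingHom.id _ := by
    apply MvPolynomial.ringHom_ext
    · intro r; simp
    · rintro (⟨p, j⟩ | ⟨q, l⟩)
      · simp [φL, spL_A, sp]
      · simp [φL, spL_A, sp]
  refine ⟨toF.comp φL.toRingHom, ?_, ?_, ?_⟩
  · refine toF_inj.comp (Function.LeftInverse.injective (g := spL) fun r => ?_)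
    exact congrArg (fun f : RPoly m n a b →+* RPoly m n a b => f r) hcomp
  · intro p j
    have hinvF : toF (IsLocalization.Away.invSelf T) = (ι T)⁻¹ := by
      apply eq_inv_of_mul_eq_one_right
      rw [← toF_A, ← map_mul, hinv, map_one]
    simp [φL, toF_A, hinvF, div_eq_mul_inv]
  · intro q l
    simp [φL, toF_A]

/-- The inclusion of the polynomial ring in its fraction field. -/
def fracMap (m n a b : ℕ) : RPoly m n a b →+* RField m n a b := algebraMap _ _

lemma fracMap_inj (m n a b : ℕ) : Function.Injective (fracMap m n a b) :=
  IsFractionRing.injective _ _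

theorem cone_lemma (m n a b : ℕ) (ha : a ≤ m) (hb : b ≤ n) (G : Set (Fin m × Fin n)) :
    RigIndep m n a b G ↔ RigIndep (m + 1) n (a + 1) b (leftCone G) := by
  have hinj : Function.Injective (fracMap (m + 1) n (a + 1) b) := fracMap_inj _ _ _ _
  obtain ⟨φ, hφ, h1, h2⟩ := exists_generic _ hinj
  rw [rigIndep_iff_s11 φ hφ, rigIndep_iff_s11 (fracMap (m + 1) n (a + 1) b) hinj, ← cone_points]
  · simp only [h1, h2]
  · rw [Ne, map_eq_zero_iff _ hinj]
    exact MvPolynomial.X_ne_zero _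
end
end

section
/- Let F be any field and let m, n, s, r be integers with 0 ≤ s ≤ m and 0 ≤ r ≤ n. If a set E ⊆ [m]×[n] is independent in the tensor matroid T_{m,n}(s,r,F), then E is independent in the tensor matroid T_{m,n}(s,r,ℚ). -/
open scoped Classical

noncomputable section

/-- The field of fractions of the polynomial ring over `F` in variables
`X i k` (`i ∈ [m]`, `k ∈ [s]`) and `Y j l` (`j ∈ [n]`, `l ∈ [r]`). -/
abbrev TField (F : Type*) [Field F] (m n s r : ℕ) :=
  FractionRing (MvPolynomial ((Fin m × Fin s) ⊕ (Fin n × Fin r)) F)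

/-- The vector `u_i ⊗ v_j ∈ K_F^{[s]×[r]}` with `(k,l)`-entry `X_{ik} · Y_{jl}`. -/
noncomputable def tvec (F : Type*) [Field F] (m n s r : ℕ) (e : Fin m × Fin n) :
    Fin s × Fin r → TField F m n s r := fun kl =>
  algebraMap (MvPolynomial ((Fin m × Fin s) ⊕ (Fin n × Fin r)) F) (TField F m n s r)
      (MvPolynomial.X (Sum.inl (e.1, kl.1))) *
  algebraMap (MvPolynomial ((Fin m × Fin s) ⊕ (Fin n × Fin r)) F) (TField F m n s r)
      (MvPolynomial.X (Sum.inr (e.2, kl.2)))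

/-- `E` is independent in the tensor matroid `T_{m,n}(s,r,F)`: the family
`{u_i ⊗ v_j : (i,j) ∈ E}` is linearly independent over `K_F`. -/
def TensorIndep (F : Type*) [Field F] (m n s r : ℕ) (E : Set (Fin m × Fin n)) : Prop :=
  LinearIndependent (TField F m n s r) (fun e : E => tvec F m n s r e)

/-- `E` is spanning in the tensor matroid `T_{m,n}(s,r,F)`: the family
`{u_i ⊗ v_j : (i,j) ∈ E}` spans `K_F^{[s]×[r]}`. -/
def TensorSpanning (F : Type*) [Field F] (m n s r : ℕ) (E : Set (Fin m × Fin n)) : Prop :=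
  Submodule.span (TField F m n s r) (tvec F m n s r '' E) = ⊤

theorem aux_minor {K ι κ : Type*} [Field K] [Fintype ι] [DecidableEq ι] [Fintype κ]
    (A : Matrix ι κ K) (h : LinearIndependent K A.row) :
    ∃ f : ι → κ, (A.submatrix id f).det ≠ 0 := by
  have h1 := h.rank_matrix
  rw [Matrix.rank_eq_finrank_span_cols] at h1
  obtain ⟨g, hg, -, hli⟩ := Submodule.exists_fun_fin_finrank_span_eq K (Set.range A.col)
  let e := (Fintype.equivFin ι).trans (finCongr h1.symm)
  choose c hc using hg
  refine ⟨fun i => c (e i), ?_⟩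
  rw [← isUnit_iff_ne_zero, ← Matrix.isUnit_iff_isUnit_det,
    ← Matrix.linearIndependent_cols_iff_isUnit]
  have := hli.comp _ e.injective
  have key : g ∘ e = (A.submatrix id (fun i => c (e i))).col := by
    funext i
    simp only [Function.comp, ← hc]
    rfl
  rw [key] at this
  exact this

/-- The integral version of the matrix. -/
def auxM (m n s r : ℕ) (E : Set (Fin m × Fin n)) :
    Matrix E (Fin s × Fin r) (MvPolynomial ((Fin m × Fin s) ⊕ (Fin n × Fin r)) ℤ) :=
  fun e kl => MvPolynomial.X (Sum.inl (e.1.1, kl.1)) * MvPolynomial.X (Sum.inr (e.1.2, kl.2))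

/-- Base change of integer polynomials to the field. -/
def auxφ (F : Type*) [Field F] (m n s r : ℕ) :
    MvPolynomial ((Fin m × Fin s) ⊕ (Fin n × Fin r)) ℤ →+* TField F m n s r :=
  (algebraMap (MvPolynomial ((Fin m × Fin s) ⊕ (Fin n × Fin r)) F) (TField F m n s r)).comp
    (MvPolynomial.map (Int.castRingHom F))

theorem auxM_map (F : Type*) [Field F] (m n s r : ℕ) (E : Set (Fin m × Fin n)) :
    (fun e : E => tvec F m n s r e) = ((auxM m n s r E).map (auxφ F m n s r)).row := by
  funext e kl
  simp [tvec, auxM, auxφ, Matrix.row]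

theorem indep_char_p_implies_indep_char_zero (F : Type*) [Field F] (m n s r : ℕ)
    (hs : s ≤ m) (hr : r ≤ n) (E : Set (Fin m × Fin n)) :
    TensorIndep F m n s r E → TensorIndep ℚ m n s r E := by
  unfold TensorIndep
  rw [auxM_map, auxM_map]
  intro h
  obtain ⟨f, hf⟩ := aux_minor _ h
  rw [Matrix.submatrix_map, ← RingHom.mapMatrix_apply, ← RingHom.map_det] at hf
  have hd : ((auxM m n s r E).submatrix id f).det ≠ 0 := by
    intro h0
    rw [h0, map_zero] at hf
    exact hf rfl
  have hinj : Function.Injective (auxφ ℚ m n s r) := by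
    unfold auxφ
    rw [RingHom.coe_comp]
    exact (IsFractionRing.injective _ _).comp
      (MvPolynomial.map_injective _ (Int.cast_injective))
  have hq : (((auxM m n s r E).map (auxφ ℚ m n s r)).submatrix id f).det ≠ 0 := by
    rw [Matrix.submatrix_map, ← RingHom.mapMatrix_apply, ← RingHom.map_det]
    exact (map_ne_zero_iff _ hinj).2 hd
  have := Matrix.linearIndependent_rows_of_det_ne_zero hq
  exact LinearIndependent.of_comp (LinearMap.funLeft _ _ f) this
end
end
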